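/- arXiv:2510.09258 — 4 statements merged into one kernel-verified Lean document; each statement's English description precedes it below -/
import Mathlib

section
/- Let N,k ≥ 1 be integers and p > 1 with p ≤ 1 + 2/(N+2k). Let u0 ∈ L¹(ℝ^{N+k}) satisfy ∫_{ℝ^{N+k}} u0(z) dz > 0. Then there is no global nonnegative weak solution of the Grushin heat equation u_t − Δ_G u = |u|^{p−1}u on ℝ^{N+k} × (0,∞) with initial datum u(·,0) = u0 (i.e., no nonnegative u that is a weak solution on ℝ^{N+k} × [0,T] for every T > 0). -/
open MeasureTheory Real Filter
open scoped ENNReal NNReal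

noncomputable section

abbrev Euc (n : ℕ) : Type := EuclideanSpace ℝ (Fin n)

/-- Second derivative of `f` at `z`, taken twice in the direction `v`. -/
def secondDeriv {N k : ℕ} (f : Euc N × Euc k → ℝ) (z v : Euc N × Euc k) : ℝ :=
  fderiv ℝ (fun w => fderiv ℝ f w v) z v

/-- The Laplacian in the `x`-variables. -/
def laplacianX {N k : ℕ} (f : Euc N × Euc k → ℝ) (z : Euc N × Euc k) : ℝ :=
  ∑ i : Fin N, secondDeriv f z (EuclideanSpace.single i 1, 0)

/-- The Laplacian in the `y`-variables. -/
def laplacianY {N k : ℕ} (f : Euc N × Euc k → ℝ) (z : Euc N × Euc k) : ℝ :=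
  ∑ j : Fin k, secondDeriv f z (0, EuclideanSpace.single j 1)

/-- The Grushin operator `Δ_G = Δ_x + |x|² Δ_y`. -/
def grushin {N k : ℕ} (f : Euc N × Euc k → ℝ) (z : Euc N × Euc k) : ℝ :=
  laplacianX f z + ‖z.1‖ ^ 2 * laplacianY f z

/-- The power nonlinearity `|v|^(p-1) · v`. -/
def absPow (p v : ℝ) : ℝ := |v| ^ (p - 1) * v

/-- The Riemann–Liouville fractional integral `I^α_{0|t} f`. -/
def fracInt (α : ℝ) (f : ℝ → ℝ) (t : ℝ) : ℝ :=
  (1 / Real.Gamma α) * ∫ s in Set.Ioc (0 : ℝ) t, (t - s) ^ (α - 1) * f s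


/-- Weak solution on `ℝ^{N+k} × [0,T]` of `u_t − Δ_G u = |u|^{p−1}u`, `u(·,0) = u0`. -/
def IsWeakSolutionHeat (N k : ℕ) (p T : ℝ) (u0 : Euc N × Euc k → ℝ)
    (u : Euc N × Euc k → ℝ → ℝ) : Prop :=
  LocallyIntegrableOn (fun q : (Euc N × Euc k) × ℝ => absPow p (u q.1 q.2))
      (Set.univ ×ˢ Set.Ioo 0 T) volume ∧
  ∀ φ : Euc N × Euc k → ℝ → ℝ,
    ContDiff ℝ 2 (fun q : (Euc N × Euc k) × ℝ => φ q.1 q.2) →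
    HasCompactSupport (fun q : (Euc N × Euc k) × ℝ => φ q.1 q.2) →
    (∀ z, φ z T = 0) →
    ((∫ z, u z T * φ z T) - ∫ z, u0 z * φ z 0) =
      (∫ t in Set.Ioc (0 : ℝ) T, ∫ z, absPow p (u z t) * φ z t) +
      (∫ t in Set.Ioc (0 : ℝ) T, ∫ z, u z t * grushin (fun w => φ w t) z) +
      (∫ t in Set.Ioc (0 : ℝ) T, ∫ z, u z t * deriv (φ z) t)


/-! ### Calculus -/

lemma secondDeriv_comp {N k : ℕ} (f : Euc N × Euc k → ℝ) (hf : ContDiff ℝ 2 f)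
    (L : (Euc N × Euc k) →L[ℝ] (Euc N × Euc k)) (z v : Euc N × Euc k) :
    secondDeriv (fun w => f (L w)) z v = secondDeriv f (L z) (L v) := by
  unfold secondDeriv
  have hd : Differentiable ℝ f := hf.differentiable (by norm_num)
  have h1 : (fun w => fderiv ℝ (fun w => f (L w)) w v)
      = fun w => (fun w' => fderiv ℝ f w' (L v)) (L w) := by
    funext w
    have : HasFDerivAt (fun w => f (L w)) ((fderiv ℝ f (L w)).comp L) w :=
      (hd (L w)).hasFDerivAt.comp w L.hasFDerivAt
    rw [this.fderiv]; rfl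
  rw [h1]
  have hd2 : Differentiable ℝ (fun w' => fderiv ℝ f w' (L v)) := by
    have h := (hf.fderiv_right (m := 1) (by norm_num)).differentiable (by norm_num)
    fun_prop
  have : HasFDerivAt (fun w => (fun w' => fderiv ℝ f w' (L v)) (L w))
      ((fderiv ℝ (fun w' => fderiv ℝ f w' (L v)) (L z)).comp L) z :=
    (hd2 (L z)).hasFDerivAt.comp z L.hasFDerivAt
  rw [this.fderiv]; rfl

lemma secondDeriv_smul' {N k : ℕ} (f : Euc N × Euc k → ℝ) (hf : ContDiff ℝ 2 f)
    (z v : Euc N × Euc k) (c : ℝ) :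
    secondDeriv f z (c • v) = c ^ 2 * secondDeriv f z v := by
  unfold secondDeriv
  have hd2 : Differentiable ℝ (fun w' => fderiv ℝ f w' v) := by
    have h := (hf.fderiv_right (m := 1) (by norm_num)).differentiable (by norm_num)
    fun_prop
  have : (fun w => fderiv ℝ f w (c • v)) = fun w => c * fderiv ℝ f w v := by
    funext w; simp
  rw [this, fderiv_const_mul (hd2 z)]
  simp; ring

lemma secondDeriv_const_mul {N k : ℕ} (f : Euc N × Euc k → ℝ) (hf : ContDiff ℝ 2 f)
    (z v : Euc N × Euc k) (c : ℝ) :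
    secondDeriv (fun w => f w * c) z v = secondDeriv f z v * c := by
  unfold secondDeriv
  have hd : Differentiable ℝ f := hf.differentiable (by norm_num)
  have hd2 : Differentiable ℝ (fun w' => fderiv ℝ f w' v) := by
    have h := (hf.fderiv_right (m := 1) (by norm_num)).differentiable (by norm_num)
    fun_prop
  have : (fun w => fderiv ℝ (fun w => f w * c) w v) = fun w => fderiv ℝ f w v * c := by
    funext w
    rw [fderiv_mul_const (hd w)]; simp [mul_comm]
  rw [this, fderiv_mul_const (hd2 z)]
  simp [mul_comm]

lemma secondDeriv_pow {N k : ℕ} (g : Euc N × Euc k → ℝ) (hg : ContDiff ℝ 2 g)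
    (z v : Euc N × Euc k) (m : ℕ) :
    secondDeriv (fun w => g w ^ (m + 2)) z v
      = g z ^ m * (((m : ℝ) + 2) * (m + 1) * (fderiv ℝ g z v) ^ 2
          + ((m : ℝ) + 2) * g z * secondDeriv g z v) := by
  unfold secondDeriv
  have hd : Differentiable ℝ g := hg.differentiable (by norm_num)
  have hd2 : Differentiable ℝ (fun w' => fderiv ℝ g w' v) := by
    have h := (hg.fderiv_right (m := 1) (by norm_num)).differentiable (by norm_num)
    fun_prop
  have h1 : (fun w => fderiv ℝ (fun w => g w ^ (m + 2)) w v)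
      = fun w => ((m : ℝ) + 2) * (g w ^ (m + 1) * fderiv ℝ g w v) := by
    funext w
    rw [((hd w).hasFDerivAt.pow (m + 2)).fderiv]
    simp
    ring
  rw [h1]
  have h2 := (((hd z).hasFDerivAt.pow (m + 1)).mul (hd2 z).hasFDerivAt).const_mul ((m : ℝ) + 2)
  have h3 : (fun w => ((m : ℝ) + 2) * (g w ^ (m + 1) * fderiv ℝ g w v)) =
    (fun y ↦ ((m : ℝ) + 2) * ((fun x ↦ g x ^ (m + 1)) * fun w' ↦ (fderiv ℝ g w') v) y) := by
    rfl
  rw [h3, h2.fderiv]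
  simp
  ring

lemma secondDeriv_continuous {N k : ℕ} (f : Euc N × Euc k → ℝ) (hf : ContDiff ℝ 2 f)
    (v : Euc N × Euc k) : Continuous (fun z => secondDeriv f z v) := by
  unfold secondDeriv
  have h1 : ContDiff ℝ 1 (fun w' => fderiv ℝ f w' v) := by
    have h := (hf.fderiv_right (m := 1) (by norm_num))
    exact h.clm_apply contDiff_const
  exact (h1.continuous_fderiv (by norm_num)).clm_apply continuous_const

lemma secondDeriv_eq_zero {N k : ℕ} (f : Euc N × Euc k → ℝ) (z v : Euc N × Euc k) (c : ℝ)
    (h : f =ᶠ[nhds z] fun _ => c) : secondDeriv f z v = 0 := by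
  unfold secondDeriv
  have h1 := h.fderiv (𝕜 := ℝ)
  have h2 : (fun w => fderiv ℝ f w v) =ᶠ[nhds z] fun _ => (0 : ℝ) := by
    filter_upwards [h1] with w hw
    rw [hw]; simp
  rw [h2.fderiv_eq]; simp

lemma grushin_eq_zero {N k : ℕ} (f : Euc N × Euc k → ℝ) (z : Euc N × Euc k) (c : ℝ)
    (h : f =ᶠ[nhds z] fun _ => c) : grushin f z = 0 := by
  simp [grushin, laplacianX, laplacianY, secondDeriv_eq_zero f z _ c h]

lemma grushin_continuous {N k : ℕ} (f : Euc N × Euc k → ℝ) (hf : ContDiff ℝ 2 f) :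
    Continuous (grushin f) := by
  unfold grushin laplacianX laplacianY
  have := secondDeriv_continuous f hf
  fun_prop

lemma grushin_mul_const {N k : ℕ} (f : Euc N × Euc k → ℝ) (hf : ContDiff ℝ 2 f)
    (z : Euc N × Euc k) (c : ℝ) :
    grushin (fun w => f w * c) z = grushin f z * c := by
  simp only [grushin, laplacianX, laplacianY, secondDeriv_const_mul f hf, ← Finset.sum_mul]
  ring

/-- The anisotropic dilation. -/
def dil (N k : ℕ) (r : ℝ) : (Euc N × Euc k) →L[ℝ] (Euc N × Euc k) :=
  (r • ContinuousLinearMap.id ℝ (Euc N)).prodMap (r ^ 2 • ContinuousLinearMap.id ℝ (Euc k))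

lemma dil_apply {N k : ℕ} (r : ℝ) (z : Euc N × Euc k) :
    dil N k r z = (r • z.1, r ^ 2 • z.2) := rfl

lemma grushin_dil {N k : ℕ} (f : Euc N × Euc k → ℝ) (hf : ContDiff ℝ 2 f) (r : ℝ)
    (z : Euc N × Euc k) :
    grushin (fun w => f (dil N k r w)) z = r ^ 2 * grushin f (dil N k r z) := by
  have hx : ∀ e : Euc N, dil N k r (e, 0) = r • (e, 0) := by intro e; simp [dil_apply]
  have hy : ∀ e : Euc k, dil N k r (0, e) = r ^ 2 • (0, e) := by intro e; simp [dil_apply]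
  have hn : ‖(dil N k r z).1‖ ^ 2 = r ^ 2 * ‖z.1‖ ^ 2 := by
    simp [dil_apply, norm_smul, mul_pow]
  simp only [grushin, laplacianX, laplacianY, secondDeriv_comp f hf, hx, hy, hn,
    secondDeriv_smul' f hf, ← Finset.mul_sum]
  ring

lemma grushin_pow_bound {N k : ℕ} (g : Euc N × Euc k → ℝ) (hg : ContDiff ℝ 2 g)
    (hc : HasCompactSupport g) (h0 : ∀ z, 0 ≤ g z) (m : ℕ) (hm : m ≠ 0) :
    ∃ C : ℝ, 0 ≤ C ∧ ∀ z, |grushin (fun w => g w ^ (m + 2)) z| ≤ C * g z ^ m := by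
  set B : Euc N × Euc k → (Euc N × Euc k) → ℝ := fun v z =>
    (((m : ℝ) + 2) * (m + 1) * (fderiv ℝ g z v) ^ 2
          + ((m : ℝ) + 2) * g z * secondDeriv g z v) with hB
  have hBc : ∀ v, Continuous (B v) := by
    intro v
    have h1 : Continuous (fun z => fderiv ℝ g z v) :=
      (hg.continuous_fderiv (by norm_num)).clm_apply continuous_const
    have h2 := secondDeriv_continuous g hg v
    have h3 := hg.continuous
    simp only [hB]
    fun_prop
  set F : (Euc N × Euc k) → ℝ := fun z => (∑ i : Fin N, B (EuclideanSpace.single i 1, 0) z)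
    + ‖z.1‖ ^ 2 * ∑ j : Fin k, B (0, EuclideanSpace.single j 1) z with hF
  have hFc : Continuous F := by simp only [hF]; fun_prop
  obtain ⟨C, hC⟩ := IsCompact.exists_bound_of_continuousOn hc hFc.continuousOn
  refine ⟨max C 0, le_max_right _ _, fun z => ?_⟩
  have e : grushin (fun w => g w ^ (m + 2)) z = g z ^ m * F z := by
    simp only [grushin, laplacianX, laplacianY, secondDeriv_pow g hg, hF, hB, ← Finset.mul_sum]
    ring
  rw [e, abs_mul, abs_of_nonneg (pow_nonneg (h0 z) m), mul_comm]
  by_cases hz : z ∈ tsupport g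
  · exact mul_le_mul_of_nonneg_right ((hC z hz).trans (le_max_left _ _)) (pow_nonneg (h0 z) m)
  · have : g z = 0 := image_eq_zero_of_notMem_tsupport hz
    simp [this, hm]

/-! ### One-dimensional lemma -/

lemma oneD_int (T : ℝ) (f g : ℝ → ℝ) (hf : ∀ ε, 0 < ε → IntegrableOn f (Set.Icc ε T))
    (hg : Continuous g) (ε : ℝ) (hε : 0 < ε) (h0 : ∀ t, t < ε → g t = 0) :
    IntegrableOn (fun t => f t * g t) (Set.Ioc 0 T) := by
  have h1 : IntegrableOn (fun t => f t * g t) (Set.Icc ε T) :=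
    (hf ε hε).mul_continuousOn hg.continuousOn isCompact_Icc
  refine h1.of_forall_sdiff_eq_zero measurableSet_Ioc ?_
  rintro t ⟨⟨ht0, htT⟩, ht⟩
  have : t < ε := by
    by_contra h
    exact ht ⟨not_lt.mp h, htT⟩
  simp [h0 t this]

lemma oneD_undef (T : ℝ) (f η : ℝ → ℝ) (hf : ∀ ε, 0 < ε → IntegrableOn f (Set.Icc ε T))
    (hn : ¬ IntegrableOn f (Set.Ioc 0 T)) (v ε : ℝ) (hv : v ≠ 0) (hε : 0 < ε)
    (h0 : ∀ t, 0 < t → t < ε → η t = v) :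
    ∫ t in Set.Ioc 0 T, f t * η t = 0 := by
  apply integral_undef
  intro h
  apply hn
  have h1 : IntegrableOn (fun t => f t * η t) (Set.Ioc 0 T ∩ Set.Iio ε) :=
    IntegrableOn.mono_set h Set.inter_subset_left
  have h2 : IntegrableOn f (Set.Ioc 0 T ∩ Set.Iio ε) := by
    have h3 : IntegrableOn (fun t => (f t * η t) * v⁻¹) (Set.Ioc 0 T ∩ Set.Iio ε) :=
      Integrable.mul_const h1 _
    refine h3.congr_fun ?_ (measurableSet_Ioc.inter measurableSet_Iio)
    rintro t ⟨ht, ht'⟩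
    simp only
    rw [h0 t ht.1 ht', mul_assoc, mul_inv_cancel₀ hv, mul_one]
  refine (h2.union (hf ε hε)).mono_set ?_
  rintro t ht
  by_cases h : t < ε
  · exact Or.inl ⟨ht, h⟩
  · exact Or.inr ⟨not_lt.mp h, ht.2⟩

lemma oneD_li (T : ℝ) (f : ℝ → ℝ) (hf : ∀ ε, 0 < ε → IntegrableOn f (Set.Icc ε T)) :
    LocallyIntegrableOn f (Set.Ioo 0 T) := by
  intro x hx
  refine ⟨Set.Icc (x/2) T, ?_, hf _ (by linarith [hx.1])⟩
  apply mem_nhdsWithin_of_mem_nhds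
  exact Icc_mem_nhds (by linarith [hx.1]) hx.2

lemma oneD_eps (T : ℝ) (g : ℝ → ℝ) (hg : tsupport g ⊆ Set.Ioo 0 T) :
    ∃ ε, 0 < ε ∧ ∀ t, t < ε → g t = 0 := by
  have h0 : (0 : ℝ) ∈ (tsupport g)ᶜ := fun h => lt_irrefl _ (hg h).1
  obtain ⟨ε, hε, h⟩ := Metric.isOpen_iff.mp (isClosed_tsupport g).isOpen_compl 0 h0
  refine ⟨ε, hε, fun t ht => ?_⟩
  by_cases h1 : 0 < t
  · apply image_eq_zero_of_notMem_tsupport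
    apply h
    simp [abs_lt]; constructor <;> linarith
  · apply image_eq_zero_of_notMem_tsupport
    intro h2
    exact h1 (hg h2).1

lemma oneD_full (T : ℝ) (g f : ℝ → ℝ) (hg : tsupport g ⊆ Set.Ioo 0 T) :
    ∫ t, g t • f t = ∫ t in Set.Ioc 0 T, f t * g t := by
  rw [← setIntegral_eq_integral_of_forall_compl_eq_zero (s := Set.Ioc 0 T)]
  · simp [mul_comm]
  · intro x hx
    have : g x = 0 := image_eq_zero_of_notMem_tsupport
      (fun h => hx ⟨(hg h).1, (hg h).2.le⟩)
    simp [this]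

lemma oneD_prim (T : ℝ) (hT : 0 < T) (ψ : ℝ → ℝ) (hψ : ContDiff ℝ 1 ψ)
    (hs : tsupport ψ ⊆ Set.Ioo 0 T) (ε : ℝ) (hε : 0 < ε) (hψ0 : ∀ t, t < ε → ψ t = 0) :
    ∃ η : ℝ → ℝ, ContDiff ℝ 2 η ∧ HasCompactSupport η ∧ η T = 0 ∧ η 0 = ∫ t in Set.Ioc 0 T, ψ t ∧
      (∀ t, 0 < t → t < min ε T → η t = η 0) ∧ (∀ t ∈ Set.Ioo 0 T, deriv η t = - ψ t) := by
  set P : ℝ → ℝ := fun t => (∫ s in (0:ℝ)..T, ψ s) - ∫ s in (0:ℝ)..t, ψ s with hP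
  have hd : ∀ t, HasDerivAt P (- ψ t) t := by
    intro t
    have := (hψ.continuous.integral_hasStrictDerivAt 0 t).hasDerivAt
    exact this.const_sub _
  have hdP : deriv P = fun t => - ψ t := funext fun t => (hd t).deriv
  have hPc : ContDiff ℝ 2 P := by
    have : (2 : WithTop ℕ∞) = 1 + 1 := by norm_num
    rw [this, contDiff_succ_iff_deriv]
    refine ⟨fun t => (hd t).differentiableAt, by simp, ?_⟩
    rw [hdP]; exact hψ.neg
  let χ : ContDiffBump (0 : ℝ) := ⟨T, T + 1, hT, by linarith⟩
  have hχ1 : ∀ t, |t| ≤ T → χ t = 1 := by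
    intro t ht
    apply χ.one_of_mem_closedBall
    simpa using ht
  have hP0 : ∀ t, 0 ≤ t → t < ε → P t = P 0 := by
    intro t ht0 ht
    have : ∫ s in (0:ℝ)..t, ψ s = 0 := by
      apply intervalIntegral.integral_zero_ae
      refine Filter.Eventually.of_forall fun s hs => hψ0 s ?_
      rw [Set.uIoc_of_le ht0] at hs
      linarith [hs.2]
    simp [hP, this]
  have e0 : χ 0 * P 0 = P 0 := by rw [hχ1 0 (by simpa using hT.le), one_mul]
  refine ⟨fun t => χ t * P t, χ.contDiff.mul hPc, χ.hasCompactSupport.mul_right, ?_, ?_, ?_, ?_⟩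
  · simp [hP]
  · simp only [e0]
    simp [hP, intervalIntegral.integral_of_le hT.le]
  · intro t ht0 ht
    simp only [e0]
    rw [hχ1 t (by rw [abs_of_pos ht0]; exact (ht.trans_le (min_le_right _ _)).le), one_mul]
    exact hP0 t ht0.le (ht.trans_le (min_le_left _ _))
  · intro t ht
    have : (fun t => χ t * P t) =ᶠ[nhds t] P := by
      filter_upwards [Ioo_mem_nhds ht.1 ht.2] with s hs
      rw [hχ1 s (by rw [abs_of_pos hs.1]; exact hs.2.le), one_mul]
    rw [this.deriv_eq, hdP]

lemma oneD (T : ℝ) (hT : 0 < T) (a b c : ℝ → ℝ) (m : ℝ)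
    (ha : ∀ ε, 0 < ε → IntegrableOn a (Set.Icc ε T))
    (hb : ∀ ε, 0 < ε → IntegrableOn b (Set.Icc ε T))
    (hc : ∀ ε, 0 < ε → IntegrableOn c (Set.Icc ε T))
    (H : ∀ η : ℝ → ℝ, ContDiff ℝ 2 η → HasCompactSupport η → η T = 0 →
      -(m * η 0) = (∫ t in Set.Ioc 0 T, a t * η t) + (∫ t in Set.Ioc 0 T, b t * η t)
        + ∫ t in Set.Ioc 0 T, c t * deriv η t) :
    IntegrableOn a (Set.Ioc 0 T) ∨
      (¬ IntegrableOn b (Set.Ioc 0 T) ∧ IntegrableOn c (Set.Ioc 0 T)) := by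
  by_contra hcon
  rw [not_or] at hcon
  obtain ⟨hna, hcon⟩ := hcon
  by_cases hbi : IntegrableOn b (Set.Ioc 0 T)
  · apply hna
    have key : ∀ᵐ x : ℝ, x ∈ Set.Ioo 0 T → a x = 0 := by
      refine isOpen_Ioo.ae_eq_zero_of_integral_contDiff_smul_eq_zero (oneD_li T a ha) ?_
      intro g hg hgc hgs
      rw [oneD_full T g a hgs]
      obtain ⟨ε, hε, hg0⟩ := oneD_eps T g hgs
      have hg2 : ContDiff ℝ 2 g := by exact_mod_cast contDiff_infty.mp hg 2
      have hgT : g T = 0 := image_eq_zero_of_notMem_tsupport (fun h => lt_irrefl _ (hgs h).2)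
      let χ : ContDiffBump (0 : ℝ) := ⟨T/2, T, by linarith, by linarith⟩
      have hχ2 : ContDiff ℝ 2 (fun t => χ t) := χ.contDiff
      have hχc : HasCompactSupport (fun t => χ t) := χ.hasCompactSupport
      have hχT : χ T = 0 := χ.zero_of_le_dist (by simp [abs_of_pos hT, χ])
      have hχ1 : ∀ t, |t| ≤ T/2 → χ t = 1 := fun t ht => χ.one_of_mem_closedBall (by simpa using ht)
      have hdχ : ∀ t, 0 < t → t < T/2 → deriv (fun t => χ t) t = 0 := by
        intro t h0 h1
        have : (fun t => χ t) =ᶠ[nhds t] fun _ => 1 := by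
          filter_upwards [Ioo_mem_nhds h0 h1] with s hs
          exact hχ1 s (by rw [abs_of_pos hs.1]; exact hs.2.le)
        rw [this.deriv_eq]; simp
      have hdg : ∀ t, t < ε → deriv g t = 0 := by
        intro t h1
        have : g =ᶠ[nhds t] fun _ => 0 := by
          filter_upwards [Iio_mem_nhds h1] with s hs
          exact hg0 s hs
        rw [this.deriv_eq]; simp
      have H1 := H _ hχ2 hχc hχT
      have H2 := H (fun t => χ t + g t) (hχ2.add hg2) (hχc.add hgc) (by simp [hχT, hgT])
      have H3 := H g hg2 hgc hgT
      have z1 := oneD_undef T a (fun t => χ t) ha hna 1 (T/2) one_ne_zero (by linarith)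
        (fun t h0 h1 => hχ1 t (by rw [abs_of_pos h0]; exact h1.le))
      have z2 := oneD_undef T a (fun t => χ t + g t) ha hna 1 (min (T/2) ε) one_ne_zero
        (lt_min (by linarith) hε)
        (fun t h0 h1 => by
          have h2 := h1.trans_le (min_le_left _ _)
          have h3 := h1.trans_le (min_le_right _ _)
          rw [hχ1 t (by rw [abs_of_pos h0]; exact h2.le), hg0 t h3, add_zero])
      rw [z1] at H1
      rw [z2] at H2
      have b1 : IntegrableOn (fun t => b t * χ t) (Set.Ioc 0 T) := by
        refine Integrable.mul_bdd (c := 1) hbi χ.continuous.aestronglyMeasurable ?_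
        exact Filter.Eventually.of_forall fun t => by
          rw [Real.norm_of_nonneg χ.nonneg]; exact χ.le_one
      have b2 := oneD_int T b g hb hg.continuous ε hε hg0
      have c1 : IntegrableOn (fun t => c t * deriv (fun t => χ t) t) (Set.Ioc 0 T) := by
        have hcd : Continuous (deriv (fun t => χ t)) := hχ2.continuous_deriv (by norm_num)
        have h1 : IntegrableOn (fun t => c t * deriv (fun t => χ t) t) (Set.Icc (T/2) T) :=
          (hc (T/2) (by linarith)).mul_continuousOn hcd.continuousOn isCompact_Icc
        refine h1.of_forall_sdiff_eq_zero measurableSet_Ioc ?_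
        rintro t ⟨⟨ht0, htT⟩, ht⟩
        have : t < T/2 := by
          by_contra h
          exact ht ⟨not_lt.mp h, htT⟩
        rw [hdχ t ht0 this, mul_zero]
      have c2 := oneD_int T c (deriv g) hc (hg2.continuous_deriv (by norm_num)) ε hε hdg
      have e1 : ∫ t in Set.Ioc 0 T, b t * (χ t + g t)
          = (∫ t in Set.Ioc 0 T, b t * χ t) + ∫ t in Set.Ioc 0 T, b t * g t := by
        rw [← integral_add b1 b2]; congr 1; ext t; ring
      have e2 : ∫ t in Set.Ioc 0 T, c t * deriv (fun t => χ t + g t) t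
          = (∫ t in Set.Ioc 0 T, c t * deriv (fun t => χ t) t)
            + ∫ t in Set.Ioc 0 T, c t * deriv g t := by
        rw [← integral_add c1 c2]; congr 1; ext t
        have : deriv (fun t => χ t + g t) t = deriv (fun t => χ t) t + deriv g t :=
          deriv_add (hχ2.differentiable (by norm_num) t) (hg2.differentiable (by norm_num) t)
        rw [this]; ring
      rw [e1, e2] at H2
      have hg00 := hg0 0 hε
      simp only [hg00, add_zero, mul_zero, neg_zero] at H1 H2 H3
      linarith
    have : IntegrableOn a (Set.Ioo 0 T) := by
      refine (integrableOn_zero (ε' := ℝ)).congr_fun_ae ?_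
      rw [Filter.EventuallyEq, ae_restrict_iff' measurableSet_Ioo]
      filter_upwards [key] with x hx h
      exact (hx h).symm
    rwa [integrableOn_Ioc_iff_integrableOn_Ioo]
  · apply hcon
    refine ⟨hbi, ?_⟩
    have key0 : ∀ ψ : ℝ → ℝ, ContDiff ℝ 1 ψ → tsupport ψ ⊆ Set.Ioo 0 T →
        (∫ t in Set.Ioc 0 T, ψ t) ≠ 0 →
        ∫ t in Set.Ioc 0 T, c t * ψ t = m * ∫ t in Set.Ioc 0 T, ψ t := by
      intro ψ hψ hs hne
      obtain ⟨ε, hε, hψ0⟩ := oneD_eps T ψ hs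
      obtain ⟨η, h1, h2, h3, h4, h5, h6⟩ := oneD_prim T hT ψ hψ hs ε hε hψ0
      have H1 := H η h1 h2 h3
      rw [oneD_undef T a η ha hna (η 0) (min ε T) (by rwa [h4]) (lt_min hε hT) h5,
        oneD_undef T b η hb hbi (η 0) (min ε T) (by rwa [h4]) (lt_min hε hT) h5] at H1
      have e : ∫ t in Set.Ioc 0 T, c t * deriv η t = - ∫ t in Set.Ioc 0 T, c t * ψ t := by
        rw [integral_Ioc_eq_integral_Ioo, integral_Ioc_eq_integral_Ioo, ← integral_neg]
        apply setIntegral_congr_fun measurableSet_Ioo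
        intro t ht
        simp [h6 t ht]
      rw [e, h4] at H1
      linarith
    have intc : ∀ ψ : ℝ → ℝ, ContDiff ℝ 1 ψ → tsupport ψ ⊆ Set.Ioo 0 T →
        IntegrableOn (fun t => c t * ψ t) (Set.Ioc 0 T) := by
      intro ψ hψ hs
      obtain ⟨ε, hε, hψ0⟩ := oneD_eps T ψ hs
      exact oneD_int T c ψ hc hψ.continuous ε hε hψ0
    have int1 : ∀ ψ : ℝ → ℝ, ContDiff ℝ 1 ψ → IntegrableOn ψ (Set.Ioc 0 T) := fun ψ hψ =>
      (hψ.continuous.integrableOn_Icc).mono_set Set.Ioc_subset_Icc_self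
    have key1 : ∀ ψ : ℝ → ℝ, ContDiff ℝ 1 ψ → tsupport ψ ⊆ Set.Ioo 0 T →
        ∫ t in Set.Ioc 0 T, c t * ψ t = m * ∫ t in Set.Ioc 0 T, ψ t := by
      intro ψ hψ hs
      by_cases hne : (∫ t in Set.Ioc 0 T, ψ t) ≠ 0
      · exact key0 ψ hψ hs hne
      rw [not_not] at hne
      let χ : ContDiffBump (T/2) := ⟨T/8, T/4, by linarith, by linarith⟩
      have hχc : ContDiff ℝ 1 (fun t => χ t) := χ.contDiff
      have hχs : tsupport (fun t => χ t) ⊆ Set.Ioo 0 T := by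
        rw [χ.tsupport_eq]
        intro t ht
        simp only [Metric.mem_closedBall, Real.dist_eq, χ] at ht
        rw [abs_le] at ht
        constructor <;> linarith [ht.1, ht.2]
      have hpos : 0 < ∫ t in Set.Ioc 0 T, χ t := by
        have := χ.integral_pos (μ := volume)
        rwa [setIntegral_eq_integral_of_forall_compl_eq_zero]
        intro x hx
        exact image_eq_zero_of_notMem_tsupport (f := fun t => χ t)
          (fun h => hx ⟨(hχs h).1, (hχs h).2.le⟩)
      have k1 := key0 _ hχc hχs hpos.ne'
      have hsum : ∫ t in Set.Ioc 0 T, (ψ t + χ t)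
          = (∫ t in Set.Ioc 0 T, ψ t) + ∫ t in Set.Ioc 0 T, χ t :=
        integral_add (int1 ψ hψ) (int1 _ hχc)
      have k2 := key0 (fun t => ψ t + χ t) (hψ.add hχc)
        ((tsupport_add ψ (fun t => χ t)).trans (Set.union_subset hs hχs))
        (by rw [hsum, hne, zero_add]; exact hpos.ne')
      have e : ∫ t in Set.Ioc 0 T, c t * (ψ t + χ t)
          = (∫ t in Set.Ioc 0 T, c t * ψ t) + ∫ t in Set.Ioc 0 T, c t * χ t := by
        rw [← integral_add (intc ψ hψ hs) (intc _ hχc hχs)]; congr 1; ext t; ring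
      rw [e, hsum] at k2
      linarith
    have key : ∀ᵐ x : ℝ, x ∈ Set.Ioo 0 T → c x - m = 0 := by
      refine isOpen_Ioo.ae_eq_zero_of_integral_contDiff_smul_eq_zero
        (oneD_li T _ (fun ε hε => (hc ε hε).sub (continuous_const.integrableOn_Icc))) ?_
      intro g hg hgc hgs
      rw [oneD_full T g _ hgs]
      have hg1 : ContDiff ℝ 1 g := by exact_mod_cast contDiff_infty.mp hg 1
      have h1 := key1 g hg1 hgs
      have e : ∫ t in Set.Ioc 0 T, (c t - m) * g t
          = (∫ t in Set.Ioc 0 T, c t * g t) - m * ∫ t in Set.Ioc 0 T, g t := by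
        rw [← integral_const_mul, ← integral_sub (intc g hg1 hgs) ((int1 g hg1).const_mul m)]
        congr 1; ext t; ring
      rw [e, h1, sub_self]
    have : IntegrableOn c (Set.Ioo 0 T) := by
      have h0 : IntegrableOn (fun _ : ℝ => m) (Set.Ioo 0 T) := by simp
      refine h0.congr_fun_ae ?_
      rw [Filter.EventuallyEq, ae_restrict_iff' measurableSet_Ioo]
      filter_upwards [key] with x hx h
      linarith [hx h]
    rwa [integrableOn_Ioc_iff_integrableOn_Ioo]

/-! ### Integrability up to `t = 0` -/

lemma vol_restrict_prod {N k : ℕ} (S : Set ℝ) :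
    (volume : Measure (Euc N × Euc k)).prod (volume.restrict S)
      = (volume : Measure ((Euc N × Euc k) × ℝ)).restrict (Set.univ ×ˢ S) := by
  rw [Measure.volume_eq_prod (Euc N × Euc k) ℝ, ← Measure.prod_restrict, Measure.restrict_univ]

lemma ext_int {N k : ℕ} (S : Set ℝ) (hS : MeasurableSet S) (f : (Euc N × Euc k) × ℝ → ℝ)
    (F : Euc N × Euc k → ℝ) (r : ℝ)
    (hf : IntegrableOn f (Metric.closedBall 0 r ×ˢ S)) (hF : Continuous F)
    (h0 : ∀ z, z ∉ Metric.closedBall (0 : Euc N × Euc k) r → F z = 0) :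
    Integrable (fun q : (Euc N × Euc k) × ℝ => f q * F q.1)
      ((volume : Measure (Euc N × Euc k)).prod (volume.restrict S)) := by
  rw [vol_restrict_prod]
  obtain ⟨C, hC⟩ := (isCompact_closedBall (0 : Euc N × Euc k) r).exists_bound_of_continuousOn
    hF.continuousOn
  have hms : MeasurableSet (Metric.closedBall (0 : Euc N × Euc k) r ×ˢ S) :=
    Metric.isClosed_closedBall.measurableSet.prod hS
  have h1 : IntegrableOn (fun q : (Euc N × Euc k) × ℝ => f q * F q.1)
      (Metric.closedBall 0 r ×ˢ S) := by
    refine Integrable.mul_bdd (c := C) hf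
      (hF.comp continuous_fst).aestronglyMeasurable ?_
    filter_upwards [ae_restrict_mem hms] with q hq
    exact hC q.1 hq.1
  refine IntegrableOn.of_forall_sdiff_eq_zero h1 (MeasurableSet.univ.prod hS) ?_
  rintro ⟨z, t⟩ ⟨h2, h3⟩
  have : z ∉ Metric.closedBall (0 : Euc N × Euc k) r := fun h => h3 ⟨h, h2.2⟩
  simp [h0 z this]

lemma slice_int {N k : ℕ} (T : ℝ) (f : (Euc N × Euc k) × ℝ → ℝ)
    (hm : AEStronglyMeasurable f
      ((volume : Measure (Euc N × Euc k)).prod (volume.restrict (Set.Ioc 0 T))))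
    (hpos : ∀ z t, 0 ≤ t → 0 ≤ f (z, t))
    (hf : ∀ r ε, 0 < ε → IntegrableOn f (Metric.closedBall 0 r ×ˢ Set.Icc ε T))
    (ξ : Euc N × Euc k → ℝ) (hξ : Continuous ξ) (hξ0 : ∀ z, 0 ≤ ξ z) (r ρ : ℝ)
    (h0 : ∀ z, z ∉ Metric.closedBall (0 : Euc N × Euc k) r → ξ z = 0)
    (h1 : ∀ z ∈ Metric.closedBall (0 : Euc N × Euc k) ρ, ξ z = 1)
    (hi : IntegrableOn (fun t => ∫ z, f (z, t) * ξ z) (Set.Ioc 0 T)) :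
    IntegrableOn f (Metric.closedBall 0 ρ ×ˢ Set.Ioc 0 T) := by
  have hmm : AEStronglyMeasurable (fun q : (Euc N × Euc k) × ℝ => f q * ξ q.1)
      ((volume : Measure (Euc N × Euc k)).prod (volume.restrict (Set.Ioc 0 T))) :=
    hm.mul (hξ.comp continuous_fst).aestronglyMeasurable
  have key : Integrable (fun q : (Euc N × Euc k) × ℝ => f q * ξ q.1)
      ((volume : Measure (Euc N × Euc k)).prod (volume.restrict (Set.Ioc 0 T))) := by
    rw [integrable_prod_iff' hmm]
    constructor
    · have h2 : ∀ n : ℕ, ∀ᵐ t : ℝ, t ∈ Set.Icc (1 / ((n : ℝ) + 1)) T →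
          Integrable (fun z => f (z, t) * ξ z) := by
        intro n
        have := (ext_int (Set.Icc (1 / ((n : ℝ) + 1)) T) measurableSet_Icc f ξ r
          (hf r _ (by positivity)) hξ h0).prod_left_ae
        rwa [ae_restrict_iff' measurableSet_Icc] at this
      rw [ae_restrict_iff' measurableSet_Ioc]
      filter_upwards [ae_all_iff.mpr h2] with t ht htT
      obtain ⟨n, hn⟩ := exists_nat_one_div_lt htT.1
      exact ht n ⟨hn.le, htT.2⟩
    · refine IntegrableOn.congr_fun hi ?_ measurableSet_Ioc
      intro t ht
      apply integral_congr_ae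
      refine Filter.Eventually.of_forall fun z => ?_
      simp only
      rw [Real.norm_of_nonneg (mul_nonneg (hpos z t ht.1.le) (hξ0 z))]
  rw [vol_restrict_prod] at key
  have h3 : IntegrableOn (fun q : (Euc N × Euc k) × ℝ => f q * ξ q.1)
      (Metric.closedBall 0 ρ ×ˢ Set.Ioc 0 T) :=
    IntegrableOn.mono_set key (Set.prod_mono (Set.subset_univ _) subset_rfl)
  refine h3.congr_fun ?_ (Metric.isClosed_closedBall.measurableSet.prod measurableSet_Ioc)
  rintro ⟨z, t⟩ hq
  simp [h1 z hq.1]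

lemma absPow_eq (p v : ℝ) (hp : 1 < p) (hv : 0 ≤ v) : absPow p v = v ^ p := by
  unfold absPow
  rw [abs_of_nonneg hv]
  rcases hv.eq_or_lt with h | h
  · rw [← h, Real.zero_rpow (by linarith : p ≠ 0)]; simp
  · rw [Real.rpow_sub_one h.ne', div_mul_cancel₀ _ h.ne']

lemma u_meas {N k : ℕ} (p : ℝ) (hp : 1 < p) (u : Euc N × Euc k → ℝ → ℝ)
    (hu : ∀ z t, 0 ≤ t → 0 ≤ u z t) (T : ℝ)
    (hm : AEStronglyMeasurable (fun q : (Euc N × Euc k) × ℝ => absPow p (u q.1 q.2))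
      (volume.restrict (Set.univ ×ˢ Set.Ioc 0 T))) :
    AEStronglyMeasurable (fun q : (Euc N × Euc k) × ℝ => u q.1 q.2)
      (volume.restrict (Set.univ ×ˢ Set.Ioc 0 T)) := by
  have h1 := (hm.aemeasurable.pow_const (1/p)).aestronglyMeasurable
  refine h1.congr ?_
  filter_upwards [ae_restrict_mem (MeasurableSet.univ.prod measurableSet_Ioc)] with q hq
  have h := hu q.1 q.2 hq.2.1.le
  rw [absPow_eq p _ hp h, ← Real.rpow_mul h, mul_one_div_cancel (by linarith : p ≠ 0),
    Real.rpow_one]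

lemma u_int {N k : ℕ} (p : ℝ) (hp : 1 < p) (u : Euc N × Euc k → ℝ → ℝ)
    (hu : ∀ z t, 0 ≤ t → 0 ≤ u z t) (T : ℝ)
    (hm : AEStronglyMeasurable (fun q : (Euc N × Euc k) × ℝ => absPow p (u q.1 q.2))
      (volume.restrict (Set.univ ×ˢ Set.Ioc 0 T)))
    (S : Set ((Euc N × Euc k) × ℝ)) (hS : MeasurableSet S) (hST : S ⊆ Set.univ ×ˢ Set.Ioc 0 T)
    (hfin : volume S < ⊤)
    (hi : IntegrableOn (fun q : (Euc N × Euc k) × ℝ => absPow p (u q.1 q.2)) S) :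
    IntegrableOn (fun q : (Euc N × Euc k) × ℝ => u q.1 q.2) S := by
  have h1 : IntegrableOn (fun q : (Euc N × Euc k) × ℝ => 1 + absPow p (u q.1 q.2)) S :=
    (integrableOn_const hfin.ne).add hi
  refine Integrable.mono' h1 ((u_meas p hp u hu T hm).mono_measure
    (Measure.restrict_mono hST le_rfl)) ?_
  filter_upwards [ae_restrict_mem hS] with q hq
  have h := hu q.1 q.2 (hST hq).2.1.le
  rw [Real.norm_of_nonneg h, absPow_eq p _ hp h]
  rcases le_total (u q.1 q.2) 1 with h2 | h2
  · have := Real.rpow_nonneg h p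
    linarith
  · have := Real.self_le_rpow_of_one_le h2 hp.le
    linarith

lemma vol_cyl {N k : ℕ} (r : ℝ) (S : Set ℝ) (hS : volume S < ⊤) :
    volume (Metric.closedBall (0 : Euc N × Euc k) r ×ˢ S) < ⊤ := by
  rw [Measure.volume_eq_prod, Measure.prod_prod]
  exact ENNReal.mul_lt_top (isCompact_closedBall _ _).measure_lt_top hS

lemma grushin_zero_out {N k : ℕ} (ξ : Euc N × Euc k → ℝ) (r : ℝ)
    (h0 : ∀ z, z ∉ Metric.closedBall (0 : Euc N × Euc k) r → ξ z = 0) :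
    ∀ z, z ∉ Metric.closedBall (0 : Euc N × Euc k) r → grushin ξ z = 0 := by
  intro z hz
  apply grushin_eq_zero ξ z 0
  filter_upwards [Metric.isClosed_closedBall.isOpen_compl.mem_nhds hz] with w hw
  exact h0 w hw

lemma w_int {N k : ℕ} (p : ℝ) (hp : 1 < p) (u0 : Euc N × Euc k → ℝ) (u : Euc N × Euc k → ℝ → ℝ)
    (hu : ∀ z t, 0 ≤ t → 0 ≤ u z t)
    (hsol : ∀ T : ℝ, 0 < T → IsWeakSolutionHeat N k p T u0 u) (T : ℝ) (hT : 0 < T) :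
    AEStronglyMeasurable (fun q : (Euc N × Euc k) × ℝ => absPow p (u q.1 q.2))
      (volume.restrict (Set.univ ×ˢ Set.Ioc 0 T)) ∧
    ∀ r, 0 < r → IntegrableOn (fun q : (Euc N × Euc k) × ℝ => absPow p (u q.1 q.2))
      (Metric.closedBall 0 r ×ˢ Set.Ioc 0 T) := by
  have hT1 := (hsol (T + 1) (by linarith)).1
  have hm : AEStronglyMeasurable (fun q : (Euc N × Euc k) × ℝ => absPow p (u q.1 q.2))
      (volume.restrict (Set.univ ×ˢ Set.Ioc 0 T)) := by
    refine hT1.aestronglyMeasurable.mono_measure (Measure.restrict_mono ?_ le_rfl)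
    exact Set.prod_mono subset_rfl (fun t ht => ⟨ht.1, by linarith [ht.2]⟩)
  have hmu := u_meas p hp u hu T hm
  refine ⟨hm, fun r hr => ?_⟩
  have hw : ∀ r ε, 0 < ε → IntegrableOn (fun q : (Euc N × Euc k) × ℝ => absPow p (u q.1 q.2))
      (Metric.closedBall 0 r ×ˢ Set.Icc ε T) := by
    intro r ε hε
    apply hT1.integrableOn_compact_subset
    · exact Set.prod_mono (Set.subset_univ _) (fun t ht => ⟨by linarith [ht.1], by linarith [ht.2]⟩)
    · exact (isCompact_closedBall _ _).prod isCompact_Icc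
  have huu : ∀ r ε, 0 < ε → IntegrableOn (fun q : (Euc N × Euc k) × ℝ => u q.1 q.2)
      (Metric.closedBall 0 r ×ˢ Set.Icc ε T) := by
    intro r ε hε
    refine u_int p hp u hu T hm _ (Metric.isClosed_closedBall.measurableSet.prod measurableSet_Icc)
      ?_ (vol_cyl r _ (by simp)) (hw r ε hε)
    exact Set.prod_mono (Set.subset_univ _) (fun t ht => ⟨by linarith [ht.1], ht.2⟩)
  have one : ∀ (ξ : Euc N × Euc k → ℝ), ContDiff ℝ 2 ξ → HasCompactSupport ξ → ∀ r : ℝ,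
      (∀ z, z ∉ Metric.closedBall (0 : Euc N × Euc k) r → ξ z = 0) →
      IntegrableOn (fun t => ∫ z, absPow p (u z t) * ξ z) (Set.Ioc 0 T) ∨
      (¬ IntegrableOn (fun t => ∫ z, u z t * grushin ξ z) (Set.Ioc 0 T) ∧
        IntegrableOn (fun t => ∫ z, u z t * ξ z) (Set.Ioc 0 T)) := by
    intro ξ hξ hξc r h0
    refine oneD T hT _ _ _ (∫ z, u0 z * ξ z) ?_ ?_ ?_ ?_
    · intro ε hε
      exact (ext_int _ measurableSet_Icc _ ξ r (hw r ε hε) hξ.continuous h0).integral_prod_right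
    · intro ε hε
      exact (ext_int _ measurableSet_Icc _ (grushin ξ) r (huu r ε hε)
        (grushin_continuous ξ hξ) (grushin_zero_out ξ r h0)).integral_prod_right
    · intro ε hε
      exact (ext_int _ measurableSet_Icc _ ξ r (huu r ε hε) hξ.continuous h0).integral_prod_right
    · intro η hη hηc hηT
      have h := (hsol T hT).2 (fun z t => ξ z * η t)
        ((hξ.comp contDiff_fst).mul (hη.comp contDiff_snd))
        (by
          refine HasCompactSupport.intro (hξc.isCompact.prod hηc.isCompact) ?_
          rintro ⟨z, t⟩ hq
          by_cases hz : z ∈ tsupport ξ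
          · have : t ∉ tsupport η := fun ht => hq ⟨hz, ht⟩
            simp [image_eq_zero_of_notMem_tsupport this]
          · simp [image_eq_zero_of_notMem_tsupport hz])
        (by intro z; simp [hηT])
      have e1 : ∀ t z, grushin (fun w => ξ w * η t) z = grushin ξ z * η t :=
        fun t z => grushin_mul_const ξ hξ z (η t)
      have e2 : ∀ z t, deriv (fun t => ξ z * η t) t = ξ z * deriv η t := by
        intro z t; simp
      simp only [hηT, mul_zero, integral_zero, e1, e2, ← mul_assoc, integral_mul_const] at h
      rw [zero_sub] at h
      exact h
  have hm' := hm
  have hmu' := hmu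
  rw [← vol_restrict_prod] at hm' hmu'
  have hbp : ∀ (f : ContDiffBump (0 : Euc N × Euc k)), ∀ z,
      z ∉ Metric.closedBall (0 : Euc N × Euc k) f.rOut → f z = 0 := by
    intro f z hz
    apply f.zero_of_le_dist
    rw [Metric.mem_closedBall, not_le] at hz
    exact hz.le
  have hwpos : ∀ z t, 0 ≤ t → 0 ≤ absPow p (u z t) := by
    intro z t ht
    rw [absPow_eq p _ hp (hu z t ht)]
    exact Real.rpow_nonneg (hu z t ht) p
  let f1 : ContDiffBump (0 : Euc N × Euc k) := ⟨r, 2 * r, hr, by linarith⟩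
  let f2 : ContDiffBump (0 : Euc N × Euc k) := ⟨2 * r, 3 * r, by linarith, by linarith⟩
  rcases one f1 f1.contDiff f1.hasCompactSupport (2 * r) (hbp f1) with h1 | ⟨hb1, -⟩
  · exact slice_int T _ hm' hwpos hw f1 f1.continuous f1.nonneg' (2 * r) r (hbp f1)
      (fun z hz => f1.one_of_mem_closedBall hz) h1
  rcases one f2 f2.contDiff f2.hasCompactSupport (3 * r) (hbp f2) with h2 | ⟨-, hc2⟩
  · have := slice_int T _ hm' hwpos hw f2 f2.continuous f2.nonneg' (3 * r) (2 * r) (hbp f2)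
      (fun z hz => f2.one_of_mem_closedBall hz) h2
    exact this.mono_set (Set.prod_mono (Metric.closedBall_subset_closedBall (by linarith)) subset_rfl)
  · exfalso
    apply hb1
    have := slice_int T _ hmu' hu huu f2 f2.continuous f2.nonneg' (3 * r) (2 * r) (hbp f2)
      (fun z hz => f2.one_of_mem_closedBall hz) hc2
    exact (ext_int _ measurableSet_Ioc _ (grushin f1) (2 * r) this
      (grushin_continuous f1 f1.contDiff) (grushin_zero_out f1 (2 * r) (hbp f1))).integral_prod_right

/-! ### Cutoffs -/

def cutX (N k : ℕ) : ContDiffBump (0 : Euc N × Euc k) := ⟨1, 2, one_pos, one_lt_two⟩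

def cutT : ContDiffBump (0 : ℝ) := ⟨1, 2, one_pos, one_lt_two⟩

def cutS (N k : ℕ) (R : ℝ) (z : Euc N × Euc k) (t : ℝ) : ℝ :=
  cutX N k (dil N k R⁻¹ z) * cutT (R⁻¹ ^ 2 * t)

def cutPhi (N k m : ℕ) (R : ℝ) (z : Euc N × Euc k) (t : ℝ) : ℝ :=
  cutX N k (dil N k R⁻¹ z) ^ (m + 2) * cutT (R⁻¹ ^ 2 * t) ^ (m + 2)

/-- Parabolic cylinder. -/
def Cyl (N k : ℕ) (R : ℝ) : Set ((Euc N × Euc k) × ℝ) :=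
  (Metric.ball (0 : Euc N) R ×ˢ Metric.ball (0 : Euc k) (R ^ 2)) ×ˢ Set.Ioo 0 (R ^ 2)

lemma cutPhi_eq {N k m : ℕ} (R : ℝ) (z : Euc N × Euc k) (t : ℝ) :
    cutPhi N k m R z t = cutS N k R z t ^ (m + 2) := by
  simp [cutPhi, cutS, mul_pow]

lemma cutS_nonneg {N k : ℕ} (R : ℝ) (z : Euc N × Euc k) (t : ℝ) : 0 ≤ cutS N k R z t :=
  mul_nonneg (ContDiffBump.nonneg _) (ContDiffBump.nonneg _)

lemma cutS_le_one {N k : ℕ} (R : ℝ) (z : Euc N × Euc k) (t : ℝ) : cutS N k R z t ≤ 1 :=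
  mul_le_one₀ (ContDiffBump.le_one _) (ContDiffBump.nonneg _) (ContDiffBump.le_one _)

lemma cutPhi_nonneg {N k m : ℕ} (R : ℝ) (z : Euc N × Euc k) (t : ℝ) : 0 ≤ cutPhi N k m R z t := by
  rw [cutPhi_eq]; exact pow_nonneg (cutS_nonneg R z t) _

lemma cutPhi_le_one {N k m : ℕ} (R : ℝ) (z : Euc N × Euc k) (t : ℝ) : cutPhi N k m R z t ≤ 1 := by
  rw [cutPhi_eq]; exact pow_le_one₀ (cutS_nonneg R z t) (cutS_le_one R z t)

lemma dil_norm_lt {N k : ℕ} (R c : ℝ) (hR : 0 < R) (z : Euc N × Euc k) :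
    ‖dil N k R⁻¹ z‖ < c ↔ ‖z.1‖ < c * R ∧ ‖z.2‖ < c * R ^ 2 := by
  rw [dil_apply, Prod.norm_def, max_lt_iff]
  simp only [norm_smul, norm_inv, norm_pow, Real.norm_of_nonneg hR.le]
  rw [inv_mul_lt_iff₀ hR, inv_pow, inv_mul_lt_iff₀ (by positivity), mul_comm R c, mul_comm (R ^ 2) c]

lemma time_lt (R c t : ℝ) (hR : 0 < R) : |R⁻¹ ^ 2 * t| < c ↔ |t| < c * R ^ 2 := by
  rw [abs_mul, abs_of_pos (by positivity : 0 < R⁻¹ ^ 2), inv_pow, inv_mul_lt_iff₀ (by positivity),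
    mul_comm]

lemma cutX_supp {N k : ℕ} (R : ℝ) (hR : 1 ≤ R) (z : Euc N × Euc k)
    (h : cutX N k (dil N k R⁻¹ z) ≠ 0) : ‖z.1‖ < 2 * R ∧ ‖z.2‖ < (2 * R) ^ 2 := by
  have h1 : dil N k R⁻¹ z ∈ Function.support (cutX N k) := h
  rw [ContDiffBump.support_eq, mem_ball_zero_iff] at h1
  have h2 := (dil_norm_lt R 2 (by linarith) z).mp h1
  refine ⟨h2.1, h2.2.trans_le ?_⟩
  nlinarith

lemma cutT_supp (R : ℝ) (hR : 1 ≤ R) (t : ℝ)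
    (h : cutT (R⁻¹ ^ 2 * t) ≠ 0) : |t| < (2 * R) ^ 2 := by
  have h1 : R⁻¹ ^ 2 * t ∈ Function.support cutT := h
  rw [ContDiffBump.support_eq, mem_ball_zero_iff, Real.norm_eq_abs] at h1
  have h2 := (time_lt R 2 t (by linarith)).mp h1
  refine h2.trans_le ?_
  nlinarith

lemma cutS_supp {N k : ℕ} (R : ℝ) (hR : 1 ≤ R) (z : Euc N × Euc k) (t : ℝ) (ht : 0 < t)
    (h : cutS N k R z t ≠ 0) : (z, t) ∈ Cyl N k (2 * R) := by
  unfold cutS at h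
  have h1 := cutX_supp R hR z (left_ne_zero_of_mul h)
  have h2 := cutT_supp R hR t (right_ne_zero_of_mul h)
  rw [abs_of_pos ht] at h2
  exact ⟨⟨by simpa using h1.1, by simpa using h1.2⟩, ht, h2⟩

lemma cutPhi_one {N k m : ℕ} (R : ℝ) (hR : 0 < R) (q : (Euc N × Euc k) × ℝ)
    (h : q ∈ Cyl N k R) : cutPhi N k m R q.1 q.2 = 1 := by
  obtain ⟨⟨h1, h2⟩, h3⟩ := h
  have a1 : cutX N k (dil N k R⁻¹ q.1) = 1 := by
    apply ContDiffBump.one_of_mem_closedBall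
    rw [mem_closedBall_zero_iff]
    exact ((dil_norm_lt R 1 hR q.1).mpr ⟨by simpa using h1, by simpa using h2⟩).le
  have a2 : cutT (R⁻¹ ^ 2 * q.2) = 1 := by
    apply ContDiffBump.one_of_mem_closedBall
    rw [mem_closedBall_zero_iff]
    exact ((time_lt R 1 q.2 hR).mpr (by rw [abs_of_pos h3.1, one_mul]; exact h3.2)).le
  rw [cutPhi, a1, a2]; simp

lemma cutPhi_contDiff {N k m : ℕ} (R : ℝ) :
    ContDiff ℝ 2 (fun q : (Euc N × Euc k) × ℝ => cutPhi N k m R q.1 q.2) := by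
  unfold cutPhi
  refine ContDiff.mul ?_ ?_
  · exact ((cutX N k).contDiff.comp ((dil N k R⁻¹).contDiff.comp contDiff_fst)).pow _
  · exact (cutT.contDiff.comp (contDiff_const.mul contDiff_snd)).pow _

lemma cutPhi_compact {N k m : ℕ} (R : ℝ) (hR : 1 ≤ R) :
    HasCompactSupport (fun q : (Euc N × Euc k) × ℝ => cutPhi N k m R q.1 q.2) := by
  refine HasCompactSupport.intro (K := (Metric.closedBall (0 : Euc N) (2 * R) ×ˢ
    Metric.closedBall (0 : Euc k) ((2 * R) ^ 2)) ×ˢ Metric.closedBall (0 : ℝ) ((2 * R) ^ 2))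
    (((isCompact_closedBall _ _).prod (isCompact_closedBall _ _)).prod (isCompact_closedBall _ _)) ?_
  intro q hq
  by_contra h
  apply hq
  unfold cutPhi at h
  have h1 := cutX_supp R hR q.1 (fun h' => left_ne_zero_of_mul h (by simp [h']))
  have h2 := cutT_supp R hR q.2 (fun h' => right_ne_zero_of_mul h (by rw [h']; simp))
  exact ⟨⟨by simpa using h1.1.le, by simpa using h1.2.le⟩, by simpa using h2.le⟩

lemma cutPhi_grushin {N k m : ℕ} (R : ℝ) (z : Euc N × Euc k) (t : ℝ) :
    grushin (fun w => cutPhi N k m R w t) z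
      = R⁻¹ ^ 2 * grushin (fun w => cutX N k w ^ (m + 2)) (dil N k R⁻¹ z)
        * cutT (R⁻¹ ^ 2 * t) ^ (m + 2) := by
  have h1 : ContDiff ℝ 2 (fun w => cutX N k w ^ (m + 2)) := (cutX N k).contDiff.pow _
  have h2 : ContDiff ℝ 2 (fun w => cutX N k (dil N k R⁻¹ w) ^ (m + 2)) :=
    h1.comp (dil N k R⁻¹).contDiff
  unfold cutPhi
  rw [grushin_mul_const _ h2, ← grushin_dil _ h1]

lemma cutPhi_deriv {N k m : ℕ} (R : ℝ) (z : Euc N × Euc k) (t : ℝ) :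
    deriv (cutPhi N k m R z) t
      = cutX N k (dil N k R⁻¹ z) ^ (m + 2) * (((m : ℝ) + 2) * cutT (R⁻¹ ^ 2 * t) ^ (m + 1)
        * (deriv cutT (R⁻¹ ^ 2 * t) * R⁻¹ ^ 2)) := by
  have hd : HasDerivAt cutT (deriv cutT (R⁻¹ ^ 2 * t)) (R⁻¹ ^ 2 * t) :=
    ((cutT.contDiff (n := 1)).differentiable (by norm_num) _).hasDerivAt
  have h1 : HasDerivAt (fun t => R⁻¹ ^ 2 * t) (R⁻¹ ^ 2) t := by
    have h := (hasDerivAt_id t).const_mul (R⁻¹ ^ 2)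
    rw [mul_one] at h
    exact h
  have h2 := ((hd.comp t h1).pow (m + 2)).const_mul (cutX N k (dil N k R⁻¹ z) ^ (m + 2))
  have h3 := h2.deriv
  simp only [Nat.cast_add, Nat.cast_ofNat, Nat.add_succ_sub_one] at h3
  exact h3

lemma cutPhi_bound (N k m : ℕ) (hm : m ≠ 0) : ∃ C : ℝ, 0 ≤ C ∧ ∀ R (z : Euc N × Euc k) t,
    |grushin (fun w => cutPhi N k m R w t) z + deriv (cutPhi N k m R z) t|
      ≤ C * R⁻¹ ^ 2 * cutS N k R z t ^ m := by
  obtain ⟨C1, hC1, h1⟩ := grushin_pow_bound (cutX N k) (cutX N k).contDiff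
    (cutX N k).hasCompactSupport (cutX N k).nonneg' m hm
  have hcs : HasCompactSupport (deriv cutT) := cutT.hasCompactSupport.deriv
  obtain ⟨C2, hC2⟩ := ((cutT.contDiff (n := 1)).continuous_deriv
    (by norm_num)).bounded_above_of_compact_support hcs
  have hC2' : 0 ≤ C2 := (norm_nonneg _).trans (hC2 0)
  refine ⟨C1 + ((m : ℝ) + 2) * C2, by positivity, fun R z t => ?_⟩
  rw [cutPhi_grushin, cutPhi_deriv]
  unfold cutS
  have b1 := h1 (dil N k R⁻¹ z)
  have b2 := hC2 (R⁻¹ ^ 2 * t)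
  rw [Real.norm_eq_abs] at b2
  set G := grushin (fun w => cutX N k w ^ (m + 2)) (dil N k R⁻¹ z)
  have gx0 : 0 ≤ cutX N k (dil N k R⁻¹ z) := ContDiffBump.nonneg _
  have gx1 : cutX N k (dil N k R⁻¹ z) ≤ 1 := ContDiffBump.le_one _
  have gt0 : 0 ≤ cutT (R⁻¹ ^ 2 * t) := ContDiffBump.nonneg _
  have gt1 : cutT (R⁻¹ ^ 2 * t) ≤ 1 := ContDiffBump.le_one _
  set X := cutX N k (dil N k R⁻¹ z)
  set Y := cutT (R⁻¹ ^ 2 * t)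
  set D := deriv cutT (R⁻¹ ^ 2 * t)
  have hr : 0 ≤ R⁻¹ ^ 2 := by positivity
  set ρ := R⁻¹ ^ 2
  have hY2 : Y ^ (m + 2) ≤ Y ^ m := pow_le_pow_of_le_one gt0 gt1 (by omega)
  have hY1 : Y ^ (m + 1) ≤ Y ^ m := pow_le_pow_of_le_one gt0 gt1 (by omega)
  have hX2 : X ^ (m + 2) ≤ X ^ m := pow_le_pow_of_le_one gx0 gx1 (by omega)
  have p1 : |ρ * G * Y ^ (m + 2)| ≤ C1 * ρ * (X * Y) ^ m := by
    rw [abs_mul, abs_mul, abs_of_nonneg hr, abs_of_nonneg (pow_nonneg gt0 _), mul_pow]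
    calc ρ * |G| * Y ^ (m + 2) ≤ ρ * (C1 * X ^ m) * Y ^ m := by gcongr
      _ = _ := by ring
  have p2 : |X ^ (m + 2) * (((m : ℝ) + 2) * Y ^ (m + 1) * (D * ρ))|
      ≤ ((m : ℝ) + 2) * C2 * ρ * (X * Y) ^ m := by
    rw [abs_mul, abs_mul, abs_mul, abs_mul, abs_of_nonneg hr, abs_of_nonneg (pow_nonneg gt0 _),
      abs_of_nonneg (pow_nonneg gx0 _), abs_of_nonneg (by positivity : 0 ≤ (m : ℝ) + 2), mul_pow]
    calc X ^ (m + 2) * (((m : ℝ) + 2) * Y ^ (m + 1) * (|D| * ρ))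
        ≤ X ^ m * (((m : ℝ) + 2) * Y ^ m * (C2 * ρ)) := by gcongr
      _ = _ := by ring
  calc _ ≤ _ := abs_add_le _ _
    _ ≤ C1 * ρ * (X * Y) ^ m + ((m : ℝ) + 2) * C2 * ρ * (X * Y) ^ m := add_le_add p1 p2
    _ = _ := by ring

lemma cutPhi_zero {N k m : ℕ} (R : ℝ) (hR : 0 < R) (q : (Euc N × Euc k) × ℝ)
    (h : q ∈ Cyl N k R) :
    grushin (fun w => cutPhi N k m R w q.2) q.1 + deriv (cutPhi N k m R q.1) q.2 = 0 := by
  obtain ⟨⟨h1, h2⟩, h3⟩ := h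
  have a1 : grushin (fun w => cutX N k w ^ (m + 2)) (dil N k R⁻¹ q.1) = 0 := by
    apply grushin_eq_zero _ _ 1
    have : dil N k R⁻¹ q.1 ∈ Metric.ball 0 (cutX N k).rIn := by
      rw [mem_ball_zero_iff]
      exact (dil_norm_lt R 1 hR q.1).mpr ⟨by simpa using h1, by simpa using h2⟩
    filter_upwards [(cutX N k).eventuallyEq_one_of_mem_ball this] with w hw
    simp [hw]
  have a2 : deriv cutT (R⁻¹ ^ 2 * q.2) = 0 := by
    have : R⁻¹ ^ 2 * q.2 ∈ Metric.ball 0 cutT.rIn := by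
      rw [mem_ball_zero_iff]
      exact (time_lt R 1 q.2 hR).mpr (by rw [abs_of_pos h3.1, one_mul]; exact h3.2)
    rw [(cutT.eventuallyEq_one_of_mem_ball this).deriv_eq]
    exact deriv_const _ _
  rw [cutPhi_grushin, cutPhi_deriv, a1, a2]; ring

lemma Cyl_meas {N k : ℕ} (R : ℝ) : MeasurableSet (Cyl N k R) :=
  (Metric.isOpen_ball.measurableSet.prod Metric.isOpen_ball.measurableSet).prod measurableSet_Ioo

lemma Cyl_vol (N k : ℕ) : ∃ c : ℝ, 0 ≤ c ∧ ∀ R, 0 < R →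
    volume (Cyl N k R) < ⊤ ∧ (volume (Cyl N k R)).toReal = c * R ^ (N + 2 * k + 2) := by
  refine ⟨(volume (Metric.ball (0 : Euc N) 1)).toReal * (volume (Metric.ball (0 : Euc k) 1)).toReal,
    by positivity, fun R hR => ?_⟩
  have e : volume (Cyl N k R) = (volume (Metric.ball (0 : Euc N) R) *
      volume (Metric.ball (0 : Euc k) (R ^ 2))) * ENNReal.ofReal (R ^ 2) := by
    unfold Cyl
    rw [Measure.volume_eq_prod (Euc N × Euc k) ℝ, Measure.prod_prod,
      Measure.volume_eq_prod (Euc N) (Euc k), Measure.prod_prod, Real.volume_Ioo, sub_zero]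
  constructor
  · rw [e]
    exact ENNReal.mul_lt_top (ENNReal.mul_lt_top measure_ball_lt_top measure_ball_lt_top)
      ENNReal.ofReal_lt_top
  · rw [e, Measure.addHaar_ball_of_pos _ _ hR, Measure.addHaar_ball_of_pos _ _ (by positivity : 0 < R ^ 2)]
    simp only [ENNReal.toReal_mul, finrank_euclideanSpace_fin]
    rw [ENNReal.toReal_ofReal (by positivity), ENNReal.toReal_ofReal (by positivity),
      ENNReal.toReal_ofReal (by positivity)]
    ring

lemma young_lam (p q l x y : ℝ) (hpq : p.HolderConjugate q) (hl : 0 < l) (hx : 0 ≤ x)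
    (hy : 0 ≤ y) : x * y ≤ l ^ p * x ^ p + l ^ (-q) * y ^ q := by
  have h := Real.young_inequality_of_nonneg (mul_nonneg hl.le hx)
    (mul_nonneg (inv_nonneg.mpr hl.le) hy) hpq
  rw [Real.mul_rpow hl.le hx, Real.mul_rpow (inv_nonneg.mpr hl.le) hy, Real.inv_rpow hl.le,
    ← Real.rpow_neg hl.le] at h
  have e : l * x * (l⁻¹ * y) = x * y := by field_simp
  rw [e] at h
  refine h.trans (add_le_add (div_le_self (by positivity) hpq.lt.le)
    (div_le_self (by positivity) hpq.symm.lt.le))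

/-! ### Main estimate -/

lemma conv_int {N k : ℕ} (T : ℝ) (F : (Euc N × Euc k) × ℝ → ℝ) (S : Set ((Euc N × Euc k) × ℝ))
    (hST : S ⊆ Set.univ ×ˢ Set.Ioc 0 T) (hi : IntegrableOn F S)
    (h0 : ∀ q : (Euc N × Euc k) × ℝ, 0 < q.2 → q ∉ S → F q = 0) :
    ∫ t in Set.Ioc (0 : ℝ) T, ∫ z, F (z, t) = ∫ q in S, F q := by
  have hU : MeasurableSet (Set.univ ×ˢ Set.Ioc 0 T : Set ((Euc N × Euc k) × ℝ)) :=
    MeasurableSet.univ.prod measurableSet_Ioc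
  have h1 : IntegrableOn F (Set.univ ×ˢ Set.Ioc 0 T) := by
    refine hi.of_forall_sdiff_eq_zero hU ?_
    rintro q ⟨hq, hq'⟩
    exact h0 q hq.2.1 hq'
  have h2 : ∫ q in (Set.univ ×ˢ Set.Ioc 0 T), F q = ∫ q in S, F q :=
    setIntegral_eq_of_subset_of_forall_sdiff_eq_zero hU hST
      (fun q hq => h0 q hq.1.2.1 hq.2)
  rw [← h2, ← vol_restrict_prod, integral_prod_symm]
  rwa [vol_restrict_prod]

lemma Cyl_subset {N k : ℕ} (R : ℝ) (hR : 1 ≤ R) :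
    Cyl N k R ⊆ Metric.closedBall (0 : Euc N × Euc k) (R ^ 2) ×ˢ Set.Ioc 0 (R ^ 2) := by
  rintro ⟨⟨x, y⟩, t⟩ ⟨⟨h1, h2⟩, h3⟩
  simp only [mem_ball_zero_iff] at h1 h2
  refine ⟨?_, h3.1, h3.2.le⟩
  rw [mem_closedBall_zero_iff, Prod.norm_def, max_le_iff]
  exact ⟨by nlinarith, h2.le⟩

lemma Cyl_mono {N k : ℕ} (R R' : ℝ) (hR : 0 < R) (h : R ≤ R') : Cyl N k R ⊆ Cyl N k R' := by
  have h2 : R ^ 2 ≤ R' ^ 2 := by gcongr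
  exact Set.prod_mono (Set.prod_mono (Metric.ball_subset_ball h) (Metric.ball_subset_ball h2))
    (Set.Ioo_subset_Ioo_right h2)

lemma main_est {N k : ℕ} (p : ℝ) (hp : 1 < p) (hpc : p ≤ 1 + 2 / ((N : ℝ) + 2 * k)) (hN : 1 ≤ N)
    (u0 : Euc N × Euc k → ℝ) (u : Euc N × Euc k → ℝ → ℝ)
    (hu : ∀ z t, 0 ≤ t → 0 ≤ u z t)
    (hsol : ∀ T : ℝ, 0 < T → IsWeakSolutionHeat N k p T u0 u) (m : ℕ) (hm : m ≠ 0)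
    (hmp : (m : ℝ) + 2 ≤ m * p) :
    ∃ M : ℝ, 0 ≤ M ∧ ∀ R, 1 ≤ R → ∀ l, 0 < l → ∃ K : ℝ, 0 ≤ K ∧
      K ≤ (∫ q in Cyl N k (2 * R), absPow p (u q.1 q.2)) - ∫ q in Cyl N k R, absPow p (u q.1 q.2) ∧
      (∫ q in Cyl N k R, absPow p (u q.1 q.2)) + K + (∫ z, u0 z * cutPhi N k m R z 0)
        ≤ l ^ p * K + l ^ (-(p / (p - 1))) * M := by
  have hpq : p.HolderConjugate (p / (p - 1)) := Real.HolderConjugate.conjExponent hp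
  set qq := p / (p - 1) with hqq
  obtain ⟨C, hC, hbound⟩ := cutPhi_bound N k m hm
  obtain ⟨c, hc, hvol⟩ := Cyl_vol N k
  refine ⟨C ^ qq * (c * 2 ^ (N + 2 * k + 2)), by positivity, fun R hR l hl => ?_⟩
  have hR0 : 0 < R := by linarith
  have hT : 0 < (2 * R) ^ 2 := by positivity
  set S := Cyl N k (2 * R) with hS
  set E := Cyl N k R with hE
  have hES : E ⊆ S := Cyl_mono R (2 * R) hR0 (by linarith)
  have hSm : MeasurableSet S := Cyl_meas _
  have hEm : MeasurableSet E := Cyl_meas _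
  have hSsub := Cyl_subset (N := N) (k := k) (2 * R) (by linarith)
  have hST : S ⊆ Set.univ ×ˢ Set.Ioc 0 ((2 * R) ^ 2) :=
    hSsub.trans (Set.prod_mono (Set.subset_univ _) subset_rfl)
  obtain ⟨hmeas, hwint⟩ := w_int p hp u0 u hu hsol ((2 * R) ^ 2) hT
  set w : (Euc N × Euc k) × ℝ → ℝ := fun q => absPow p (u q.1 q.2) with hw
  have hwS : IntegrableOn w S := (hwint ((2 * R) ^ 2) hT).mono_set hSsub
  have huS : IntegrableOn (fun q : (Euc N × Euc k) × ℝ => u q.1 q.2) S :=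
    u_int p hp u hu _ hmeas S hSm hST (hvol (2 * R) (by linarith)).1 hwS
  have hpos : ∀ q ∈ S, 0 ≤ u q.1 q.2 := fun q hq => hu _ _ (hST hq).2.1.le
  have hwpos : ∀ q ∈ S, 0 ≤ w q := by
    intro q hq
    simp only [hw]
    rw [absPow_eq p _ hp (hpos q hq)]
    exact Real.rpow_nonneg (hpos q hq) p
  set φ : (Euc N × Euc k) × ℝ → ℝ := fun q => cutPhi N k m R q.1 q.2 with hφ
  have hφc : Continuous φ := (cutPhi_contDiff R).continuous
  set G : (Euc N × Euc k) × ℝ → ℝ := fun q => grushin (fun v => cutPhi N k m R v q.2) q.1 with hG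
  set D : (Euc N × Euc k) × ℝ → ℝ := fun q => deriv (cutPhi N k m R q.1) q.2 with hD
  have hGc : Continuous G := by
    have h1 : Continuous (grushin (fun w => cutX N k w ^ (m + 2))) :=
      grushin_continuous _ ((cutX N k).contDiff.pow _)
    have h2 : Continuous (fun q : (Euc N × Euc k) × ℝ => dil N k R⁻¹ q.1) :=
      (dil N k R⁻¹).continuous.comp continuous_fst
    have h3 : Continuous (fun q : (Euc N × Euc k) × ℝ => cutT (R⁻¹ ^ 2 * q.2)) :=
      cutT.continuous.comp (by fun_prop)
    simp only [hG, cutPhi_grushin]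
    exact (continuous_const.mul (h1.comp h2)).mul (h3.pow _)
  have hDc : Continuous D := by
    have h0 : Continuous (deriv cutT) := (cutT.contDiff (n := 1)).continuous_deriv (by norm_num)
    have h1 : Continuous (cutX N k) := (cutX N k).continuous
    have h2 : Continuous (fun q : (Euc N × Euc k) × ℝ => dil N k R⁻¹ q.1) :=
      (dil N k R⁻¹).continuous.comp continuous_fst
    have h4 : Continuous (fun q : (Euc N × Euc k) × ℝ => R⁻¹ ^ 2 * q.2) := by fun_prop
    have h3 : Continuous (fun q : (Euc N × Euc k) × ℝ => cutT (R⁻¹ ^ 2 * q.2)) :=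
      cutT.continuous.comp h4
    simp only [hD, cutPhi_deriv]
    exact ((h1.comp h2).pow _).mul ((continuous_const.mul (h3.pow _)).mul
      ((h0.comp h4).mul continuous_const))
  have hmulint : ∀ f F : (Euc N × Euc k) × ℝ → ℝ, IntegrableOn f S → Continuous F →
      IntegrableOn (fun q => f q * F q) S := by
    intro f F hf hF
    obtain ⟨B, hB⟩ := ((isCompact_closedBall (0 : Euc N × Euc k) ((2 * R) ^ 2)).prod
      (isCompact_Icc (a := (0 : ℝ)) (b := (2 * R) ^ 2))).exists_bound_of_continuousOn hF.continuousOn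
    refine Integrable.mul_bdd (c := B) hf hF.aestronglyMeasurable ?_
    filter_upwards [ae_restrict_mem hSm] with q hq
    have := hSsub hq
    exact hB q ⟨this.1, this.2.1.le, this.2.2⟩
  have i1 := hmulint w φ hwS hφc
  have i2 := hmulint _ G huS hGc
  have i3 := hmulint _ D huS hDc
  have hs0 : ∀ q : (Euc N × Euc k) × ℝ, 0 < q.2 → q ∉ S → cutS N k R q.1 q.2 = 0 := by
    intro q hq hqS
    by_contra h
    exact hqS (cutS_supp R hR q.1 q.2 hq h)
  have hX0 : ∀ q : (Euc N × Euc k) × ℝ, 0 < q.2 → q ∉ S → G q = 0 ∧ D q = 0 := by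
    intro q hq hqS
    have h := hs0 q hq hqS
    unfold cutS at h
    simp only [hG, hD, cutPhi_grushin, cutPhi_deriv]
    rcases mul_eq_zero.mp h with h | h
    · have hb : grushin (fun w => cutX N k w ^ (m + 2)) (dil N k R⁻¹ q.1) = 0 := by
        have := grushin_pow_bound (cutX N k) (cutX N k).contDiff
          (cutX N k).hasCompactSupport (cutX N k).nonneg' m hm
        obtain ⟨C1, hC1, h1⟩ := this
        have h2 := h1 (dil N k R⁻¹ q.1)
        rw [h, zero_pow hm, mul_zero] at h2
        exact abs_eq_zero.mp (le_antisymm h2 (abs_nonneg _))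
      rw [hb, h]; simp
    · rw [h]; simp
  have hweak := (hsol ((2 * R) ^ 2) hT).2 (cutPhi N k m R) (cutPhi_contDiff R)
    (cutPhi_compact R hR) (by
      intro z
      by_contra h
      have := cutT_supp R hR ((2 * R) ^ 2)
        (fun h' => h (by unfold cutPhi; rw [h']; simp))
      rw [abs_of_pos hT] at this
      exact lt_irrefl _ this)
  have hφT : ∀ z, cutPhi N k m R z ((2 * R) ^ 2) = 0 := by
    intro z
    by_contra h
    have := cutT_supp R hR ((2 * R) ^ 2)
      (fun h' => h (by unfold cutPhi; rw [h']; simp))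
    rw [abs_of_pos hT] at this
    exact lt_irrefl _ this
  have c1 := conv_int ((2 * R) ^ 2) (fun q => w q * φ q) S hST i1 (by
    intro q hq hqS
    simp only [hφ]
    rw [cutPhi_eq, hs0 q hq hqS]; simp)
  have c2 := conv_int ((2 * R) ^ 2) (fun q => u q.1 q.2 * G q) S hST i2 (by
    intro q hq hqS
    simp only [(hX0 q hq hqS).1, mul_zero])
  have c3 := conv_int ((2 * R) ^ 2) (fun q => u q.1 q.2 * D q) S hST i3 (by
    intro q hq hqS
    simp only [(hX0 q hq hqS).2, mul_zero])
  simp only [hφT, mul_zero, integral_zero, zero_sub] at hweak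
  simp only [hw, hφ, hG, hD] at c1 c2 c3
  rw [c1, c2, c3] at hweak
  -- splitting
  have hi1E : IntegrableOn (fun q => w q * φ q) E := i1.mono_set hES
  have hi1D : IntegrableOn (fun q => w q * φ q) (S \ E) := i1.mono_set Set.sdiff_subset
  have split1 : ∫ q in S, w q * φ q = (∫ q in E, w q) + ∫ q in S \ E, w q * φ q := by
    have h1 : ∫ q in E, w q = ∫ q in E, w q * φ q := by
      apply setIntegral_congr_fun hEm
      intro q hq
      simp only [hφ]
      rw [cutPhi_one R hR0 q hq, mul_one]
    rw [h1, ← setIntegral_union Set.disjoint_sdiff_right (hSm.diff hEm) hi1E hi1D,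
      Set.union_sdiff_cancel hES]
  have split2 : ∫ q in S, w q = (∫ q in E, w q) + ∫ q in S \ E, w q := by
    rw [← setIntegral_union Set.disjoint_sdiff_right (hSm.diff hEm) (hwS.mono_set hES)
      (hwS.mono_set Set.sdiff_subset), Set.union_sdiff_cancel hES]
  refine ⟨∫ q in S \ E, w q * φ q, ?_, ?_, ?_⟩
  · apply setIntegral_nonneg (hSm.diff hEm)
    intro q hq
    exact mul_nonneg (hwpos q hq.1) (cutPhi_nonneg R _ _)
  · have : ∫ q in S \ E, w q * φ q ≤ ∫ q in S \ E, w q := by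
      apply setIntegral_mono_on hi1D (hwS.mono_set Set.sdiff_subset) (hSm.diff hEm)
      intro q hq
      exact mul_le_of_le_one_right (hwpos q hq.1) (cutPhi_le_one R _ _)
    linarith
  · have hy0 : 0 ≤ C * R⁻¹ ^ 2 := by positivity
    have hsum : (∫ q in S, u q.1 q.2 * G q) + (∫ q in S, u q.1 q.2 * D q)
        = ∫ q in S \ E, u q.1 q.2 * (G q + D q) := by
      rw [← integral_add i2 i3]
      have e1 : ∫ q in S, (u q.1 q.2 * G q + u q.1 q.2 * D q)
          = ∫ q in S, u q.1 q.2 * (G q + D q) := by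
        congr 1; ext q; ring
      rw [e1]
      apply setIntegral_eq_of_subset_of_forall_sdiff_eq_zero hSm Set.sdiff_subset
      intro q hq
      have hqE : q ∈ E := by
        by_contra h
        exact hq.2 ⟨hq.1, h⟩
      have := cutPhi_zero (m := m) R hR0 q hqE
      simp only [hG, hD]
      rw [this, mul_zero]
    have i4 : IntegrableOn (fun q => u q.1 q.2 * (G q + D q)) (S \ E) :=
      (hmulint _ _ huS (hGc.add hDc)).mono_set Set.sdiff_subset
    have hfin : volume (S \ E) < ⊤ :=
      (measure_mono Set.sdiff_subset).trans_lt (hvol (2 * R) (by linarith)).1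
    have i5 : IntegrableOn (fun q => l ^ p * (w q * φ q) + l ^ (-qq) * (C * R⁻¹ ^ 2) ^ qq)
        (S \ E) := (hi1D.const_mul _).add (integrableOn_const hfin.ne)
    have hle : - ∫ q in S \ E, u q.1 q.2 * (G q + D q)
        ≤ ∫ q in S \ E, (l ^ p * (w q * φ q) + l ^ (-qq) * (C * R⁻¹ ^ 2) ^ qq) := by
      rw [← integral_neg]
      apply setIntegral_mono_on i4.neg i5 (hSm.diff hEm)
      intro q hq
      have hu' := hpos q hq.1
      have hb := hbound R q.1 q.2
      have hs := cutS_nonneg R q.1 q.2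
      have hs1 := cutS_le_one R q.1 q.2
      calc -(u q.1 q.2 * (G q + D q)) ≤ |u q.1 q.2 * (G q + D q)| := neg_le_abs _
        _ = u q.1 q.2 * |G q + D q| := by rw [abs_mul, abs_of_nonneg hu']
        _ ≤ u q.1 q.2 * (C * R⁻¹ ^ 2 * cutS N k R q.1 q.2 ^ m) :=
            mul_le_mul_of_nonneg_left hb hu'
        _ = (u q.1 q.2 * cutS N k R q.1 q.2 ^ m) * (C * R⁻¹ ^ 2) := by ring
        _ ≤ l ^ p * (u q.1 q.2 * cutS N k R q.1 q.2 ^ m) ^ p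
            + l ^ (-qq) * (C * R⁻¹ ^ 2) ^ qq :=
          young_lam p qq l _ _ hpq hl (by positivity) hy0
        _ ≤ _ := by
          have : (u q.1 q.2 * cutS N k R q.1 q.2 ^ m) ^ p ≤ w q * φ q := by
            simp only [hw, hφ]
            rw [absPow_eq p _ hp hu', cutPhi_eq, Real.mul_rpow hu' (by positivity)]
            apply mul_le_mul_of_nonneg_left _ (by positivity)
            rw [← Real.rpow_natCast, ← Real.rpow_natCast, ← Real.rpow_mul hs]
            apply Real.rpow_le_rpow_of_exponent_ge' hs hs1 (by positivity)
            push_cast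
            exact hmp
          gcongr
    have hint : ∫ q in S \ E, (l ^ p * (w q * φ q) + l ^ (-qq) * (C * R⁻¹ ^ 2) ^ qq)
        = l ^ p * (∫ q in S \ E, w q * φ q)
          + (volume (S \ E)).toReal * (l ^ (-qq) * (C * R⁻¹ ^ 2) ^ qq) := by
      rw [integral_add (hi1D.const_mul _) (integrableOn_const hfin.ne), integral_const_mul,
        setIntegral_const]
      rfl
    have hvle : (volume (S \ E)).toReal ≤ c * (2 * R) ^ (N + 2 * k + 2) := by
      rw [← (hvol (2 * R) (by linarith)).2]
      exact ENNReal.toReal_mono (hvol (2 * R) (by linarith)).1.ne (measure_mono Set.sdiff_subset)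
    have hexp : R ^ (N + 2 * k + 2) * (R⁻¹ ^ 2) ^ qq ≤ 1 := by
      rw [inv_pow, Real.inv_rpow (by positivity), ← Real.rpow_natCast R 2, ← Real.rpow_mul hR0.le,
        ← Real.rpow_natCast R (N + 2 * k + 2), ← div_eq_mul_inv]
      apply div_le_one_of_le₀ _ (by positivity)
      apply Real.rpow_le_rpow_of_exponent_le hR
      have hQ : (0 : ℝ) < (N : ℝ) + 2 * k := by
        have : (1 : ℝ) ≤ N := by exact_mod_cast hN
        positivity
      have h1 : (p - 1) * ((N : ℝ) + 2 * k) ≤ 2 := by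
        rw [← le_div_iff₀ hQ]; linarith
      rw [hqq]
      push_cast
      rw [← mul_div_assoc, le_div_iff₀ (by linarith)]
      nlinarith
    have hM : (volume (S \ E)).toReal * (l ^ (-qq) * (C * R⁻¹ ^ 2) ^ qq)
        ≤ l ^ (-qq) * (C ^ qq * (c * 2 ^ (N + 2 * k + 2))) := by
      have hl0 : 0 ≤ l ^ (-qq) := by positivity
      have hC0 : 0 ≤ C ^ qq := by positivity
      calc (volume (S \ E)).toReal * (l ^ (-qq) * (C * R⁻¹ ^ 2) ^ qq)
          ≤ (c * (2 * R) ^ (N + 2 * k + 2)) * (l ^ (-qq) * (C * R⁻¹ ^ 2) ^ qq) := by gcongr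
        _ = (l ^ (-qq) * (C ^ qq * (c * 2 ^ (N + 2 * k + 2))))
            * (R ^ (N + 2 * k + 2) * (R⁻¹ ^ 2) ^ qq) := by
          rw [Real.mul_rpow hC (by positivity), mul_pow]; ring
        _ ≤ (l ^ (-qq) * (C ^ qq * (c * 2 ^ (N + 2 * k + 2)))) * 1 := by gcongr
        _ = _ := mul_one _
    have hweak' : -(∫ z, u0 z * cutPhi N k m R z 0) = (∫ q in S, w q * φ q)
      + (∫ q in S, u q.1 q.2 * G q) + ∫ q in S, u q.1 q.2 * D q := hweak
    rw [add_assoc, hsum, split1] at hweak'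
    linarith

lemma cutPhi_cont0 {N k m : ℕ} (R : ℝ) :
    Continuous (fun z : Euc N × Euc k => cutPhi N k m R z 0) := by
  have h1 : Continuous (fun z : Euc N × Euc k => cutX N k (dil N k R⁻¹ z)) :=
    (cutX N k).continuous.comp (dil N k R⁻¹).continuous
  unfold cutPhi
  exact (h1.pow _).mul continuous_const

lemma u0_tendsto {N k : ℕ} (m : ℕ) (u0 : Euc N × Euc k → ℝ) (hu0 : Integrable u0) :
    Tendsto (fun n : ℕ => ∫ z, u0 z * cutPhi N k m (2 ^ n) z 0) atTop (nhds (∫ z, u0 z)) := by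
  have hT : Tendsto (fun n : ℕ => (2 : ℝ) ^ n) atTop atTop :=
    tendsto_pow_atTop_atTop_of_one_lt (by norm_num)
  refine tendsto_integral_of_dominated_convergence (fun z => ‖u0 z‖) ?_ hu0.norm ?_ ?_
  · intro n
    exact hu0.aestronglyMeasurable.mul (cutPhi_cont0 (2 ^ n)).aestronglyMeasurable
  · intro n
    refine Filter.Eventually.of_forall fun z => ?_
    rw [norm_mul, Real.norm_of_nonneg (cutPhi_nonneg _ _ _)]
    exact mul_le_of_le_one_right (norm_nonneg _) (cutPhi_le_one _ _ _)
  · refine Filter.Eventually.of_forall fun z => ?_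
    apply tendsto_const_nhds.congr'
    filter_upwards [hT.eventually_gt_atTop ‖z.1‖, hT.eventually_gt_atTop ‖z.2‖] with n h1 h2
    have hn : (1 : ℝ) ≤ 2 ^ n := one_le_pow₀ (by norm_num)
    have a1 : cutX N k (dil N k (2 ^ n)⁻¹ z) = 1 := by
      apply ContDiffBump.one_of_mem_closedBall
      rw [mem_closedBall_zero_iff]
      refine ((dil_norm_lt (2 ^ n) 1 (by positivity) z).mpr ⟨by rwa [one_mul], ?_⟩).le
      nlinarith
    have a2 : cutT 0 = 1 := by
      apply ContDiffBump.one_of_mem_closedBall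
      rw [mem_closedBall_zero_iff, norm_zero]
      exact cutT.rIn_pos.le
    rw [cutPhi, a1, mul_zero, a2]; simp

lemma final_seq (p q M m0 : ℝ) (hq : 0 < q) (hm0 : 0 < m0) (J mm : ℕ → ℝ)
    (hJ0 : ∀ n, 0 ≤ J n) (hmm : Tendsto mm atTop (nhds m0))
    (h : ∀ n, ∀ l : ℝ, 0 < l → ∃ K, 0 ≤ K ∧ K ≤ J (n + 1) - J n ∧
      J n + K + mm n ≤ l ^ p * K + l ^ (-q) * M) : False := by
  have hmono : Monotone J := monotone_nat_of_le_succ fun n => by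
    obtain ⟨K, h1, h2, -⟩ := h n 1 one_pos
    linarith
  have hbd : BddAbove (Set.range J) := by
    obtain ⟨B, hB⟩ := hmm.bddBelow_range
    refine ⟨M - B, ?_⟩
    rintro _ ⟨n, rfl⟩
    obtain ⟨K, h1, h2, h3⟩ := h n 1 one_pos
    have := hB ⟨n, rfl⟩
    simp only [Real.one_rpow, one_mul] at h3
    linarith
  have hJ := tendsto_atTop_ciSup hmono hbd
  have hJ1 := hJ.comp (tendsto_add_atTop_nat 1)
  have hdiff : Tendsto (fun n => J (n + 1) - J n) atTop (nhds 0) := by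
    have := hJ1.sub hJ
    rw [sub_self] at this
    exact this
  have key : ∀ l : ℝ, 0 < l → m0 ≤ l ^ (-q) * M := by
    intro l hl
    have ht : Tendsto (fun n => l ^ p * (J (n + 1) - J n) + l ^ (-q) * M) atTop
        (nhds (l ^ p * 0 + l ^ (-q) * M)) := (hdiff.const_mul _).add_const _
    rw [mul_zero, zero_add] at ht
    refine le_of_tendsto_of_tendsto' hmm ht fun n => ?_
    obtain ⟨K, h1, h2, h3⟩ := h n l hl
    have h4 : l ^ p * K ≤ l ^ p * (J (n + 1) - J n) := by gcongr
    linarith [hJ0 n]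
  have hlim : Tendsto (fun l : ℝ => l ^ (-q) * M) atTop (nhds (0 * M)) :=
    (tendsto_rpow_neg_atTop hq).mul_const M
  rw [zero_mul] at hlim
  have := ge_of_tendsto hlim ((eventually_gt_atTop 0).mono key)
  linarith

/-- **Theorem 1 (Fujita-type nonexistence for the Grushin heat equation).**
If `1 < p ≤ 1 + 2/(N+2k)` and `u0 ∈ L¹` with `∫ u0 > 0`, then there is no global
nonnegative weak solution of `u_t − Δ_G u = |u|^{p−1}u`, `u(·,0) = u0`. -/
theorem no_global_weak_solution_heat (N k : ℕ) (hN : 1 ≤ N) (hk : 1 ≤ k)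
    (p : ℝ) (hp : 1 < p) (hpc : p ≤ 1 + 2 / ((N : ℝ) + 2 * k))
    (u0 : Euc N × Euc k → ℝ) (hu0 : Integrable u0)
    (hu0pos : 0 < ∫ z, u0 z) :
    ¬ ∃ u : Euc N × Euc k → ℝ → ℝ,
        (∀ z : Euc N × Euc k, ∀ t : ℝ, 0 ≤ t → 0 ≤ u z t) ∧
        (∀ T : ℝ, 0 < T → IsWeakSolutionHeat N k p T u0 u) := by

  rintro ⟨u, hu, hsol⟩
  obtain ⟨m, hm⟩ := exists_nat_ge (2 / (p - 1))
  have hp1 : 0 < p - 1 := by linarith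
  have hmp : (m : ℝ) + 2 ≤ m * p := by
    rw [div_le_iff₀ hp1] at hm
    linarith
  have hm0 : m ≠ 0 := by
    rintro rfl
    norm_num at hmp
  obtain ⟨M, -, hM⟩ := main_est p hp hpc hN u0 u hu hsol m hm0 hmp
  refine final_seq p (p / (p - 1)) M (∫ z, u0 z) (by positivity) hu0pos
    (fun n => ∫ q in Cyl N k (2 ^ n), absPow p (u q.1 q.2)) _ ?_ (u0_tendsto m u0 hu0) ?_
  · intro n
    apply setIntegral_nonneg (Cyl_meas _)
    intro q hq
    have h := hu q.1 q.2 hq.2.1.le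
    rw [absPow_eq p _ hp h]
    exact Real.rpow_nonneg h p
  · intro n l hl
    have := hM (2 ^ n) (one_le_pow₀ (by norm_num)) l hl
    rw [← pow_succ'] at this
    exact this
end
end

section
/- Let N,k ≥ 1 be integers, ε > 0, A > 0, c > 0, and define Θ : ℝ^{N+k} → ℝ by Θ(z) = c·exp(−ε·√(A + |x|⁴ + |y|²)) for z = (x,y), x ∈ ℝ^N, y ∈ ℝ^k. Then for all z ∈ ℝ^{N+k} one has Δ_G Θ(z) ≥ −ε(2(N+2) + k)·Θ(z), where Δ_G Θ = Δ_x Θ + |x|² Δ_y Θ. -/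
open MeasureTheory Real Filter
open scoped ENNReal NNReal

noncomputable section

lemma aux_norm {n : ℕ} (x a : Euc n) :
    HasDerivAt (fun t : ℝ => ‖x + t • a‖ ^ 2) (2 * inner ℝ x a) 0 := by
  have h : HasDerivAt (fun t : ℝ => x + t • a) a 0 := by
    simpa using ((hasDerivAt_id (0:ℝ)).smul_const a).const_add x
  simpa using h.norm_sq

lemma aux_inner {n : ℕ} (x a : Euc n) :
    HasDerivAt (fun t : ℝ => (inner ℝ (x + t • a) a : ℝ)) (‖a‖ ^ 2) 0 := by
  have h : HasDerivAt (fun t : ℝ => x + t • a) a 0 := by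
    simpa using ((hasDerivAt_id (0:ℝ)).smul_const a).const_add x
  simpa using h.inner ℝ (hasDerivAt_const (0:ℝ) a)

lemma aux_fderiv {N k : ℕ} {f : Euc N × Euc k → ℝ} {w v : Euc N × Euc k} {d : ℝ}
    (hf : DifferentiableAt ℝ f w)
    (h : HasDerivAt (fun t : ℝ => f (w + t • v)) d 0) : fderiv ℝ f w v = d := by
  rw [← hf.lineDeriv_eq_fderiv]
  exact h.deriv

lemma aux_second {N k : ℕ} (ε A c : ℝ) (hA : 0 < A) (hc : 0 < c)
    (z v : Euc N × Euc k) :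
    secondDeriv (fun w : Euc N × Euc k =>
      c * Real.exp (-ε * Real.sqrt (A + ‖w.1‖ ^ 4 + ‖w.2‖ ^ 2))) z v =
    (c * Real.exp (-ε * Real.sqrt (A + ‖z.1‖ ^ 4 + ‖z.2‖ ^ 2))) *
     (ε ^ 2 * ((4 * ‖z.1‖ ^ 2 * inner ℝ z.1 v.1 + 2 * inner ℝ z.2 v.2) /
        (2 * Real.sqrt (A + ‖z.1‖ ^ 4 + ‖z.2‖ ^ 2))) ^ 2
      + ε * (4 * ‖z.1‖ ^ 2 * inner ℝ z.1 v.1 + 2 * inner ℝ z.2 v.2) ^ 2 /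
        (4 * Real.sqrt (A + ‖z.1‖ ^ 4 + ‖z.2‖ ^ 2) ^ 3)
      - ε * (8 * (inner ℝ z.1 v.1) ^ 2 + 4 * ‖z.1‖ ^ 2 * ‖v.1‖ ^ 2 + 2 * ‖v.2‖ ^ 2) /
        (2 * Real.sqrt (A + ‖z.1‖ ^ 4 + ‖z.2‖ ^ 2))) := by
  have e4 : ∀ w : Euc N × Euc k, ‖w.1‖ ^ 4 = (‖w.1‖ ^ 2) ^ 2 := fun w => by ring
  simp only [e4]
  have pos : ∀ w : Euc N × Euc k, 0 < A + (‖w.1‖ ^ 2) ^ 2 + ‖w.2‖ ^ 2 := fun w => by positivity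
  have dx : Differentiable ℝ (fun w : Euc N × Euc k => ‖w.1‖ ^ 2) :=
    differentiable_fst.norm_sq ℝ
  have dy : Differentiable ℝ (fun w : Euc N × Euc k => ‖w.2‖ ^ 2) :=
    differentiable_snd.norm_sq ℝ
  have du : Differentiable ℝ (fun w : Euc N × Euc k => A + (‖w.1‖ ^ 2) ^ 2 + ‖w.2‖ ^ 2) :=
    ((dx.pow 2).const_add A).add dy
  have dq : Differentiable ℝ
      (fun w : Euc N × Euc k => Real.sqrt (A + (‖w.1‖ ^ 2) ^ 2 + ‖w.2‖ ^ 2)) :=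
    du.sqrt (fun w => (pos w).ne')
  have df : Differentiable ℝ (fun w : Euc N × Euc k =>
      c * Real.exp (-ε * Real.sqrt (A + (‖w.1‖ ^ 2) ^ 2 + ‖w.2‖ ^ 2))) :=
    ((dq.const_mul (-ε)).exp).const_mul c
  have dD : Differentiable ℝ (fun w : Euc N × Euc k =>
      4 * ‖w.1‖ ^ 2 * inner ℝ w.1 v.1 + 2 * inner ℝ w.2 v.2) :=
    ((dx.const_mul 4).mul (differentiable_fst.inner ℝ (differentiable_const _))).add
      ((differentiable_snd.inner ℝ (differentiable_const _)).const_mul 2)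
  -- line derivatives
  have hq : ∀ w : Euc N × Euc k, HasDerivAt (fun t : ℝ =>
      Real.sqrt (A + (‖(w + t • v).1‖ ^ 2) ^ 2 + ‖(w + t • v).2‖ ^ 2))
      ((4 * ‖w.1‖ ^ 2 * inner ℝ w.1 v.1 + 2 * inner ℝ w.2 v.2) /
        (2 * Real.sqrt (A + (‖w.1‖ ^ 2) ^ 2 + ‖w.2‖ ^ 2))) 0 := by
    intro w
    have h := ((((aux_norm w.1 v.1).pow 2).const_add A).add (aux_norm w.2 v.2)).sqrt
      (by simpa using (pos w).ne')
    refine h.congr_deriv ?_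
    simp
    ring
  have hf : ∀ w : Euc N × Euc k, HasDerivAt (fun t : ℝ =>
      c * Real.exp (-ε * Real.sqrt (A + (‖(w + t • v).1‖ ^ 2) ^ 2 + ‖(w + t • v).2‖ ^ 2)))
      ((c * Real.exp (-ε * Real.sqrt (A + (‖w.1‖ ^ 2) ^ 2 + ‖w.2‖ ^ 2))) * (-ε *
      ((4 * ‖w.1‖ ^ 2 * inner ℝ w.1 v.1 + 2 * inner ℝ w.2 v.2) /
        (2 * Real.sqrt (A + (‖w.1‖ ^ 2) ^ 2 + ‖w.2‖ ^ 2))))) 0 := by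
    intro w
    refine (((hq w).const_mul (-ε)).exp.const_mul c).congr_deriv ?_
    simp
    ring
  have hD : HasDerivAt (fun t : ℝ =>
      4 * ‖(z + t • v).1‖ ^ 2 * inner ℝ (z + t • v).1 v.1 + 2 * inner ℝ (z + t • v).2 v.2)
      (8 * (inner ℝ z.1 v.1) ^ 2 + 4 * ‖z.1‖ ^ 2 * ‖v.1‖ ^ 2 + 2 * ‖v.2‖ ^ 2) 0 := by
    refine ((((aux_norm z.1 v.1).const_mul 4).mul (aux_inner z.1 v.1)).add
      ((aux_inner z.2 v.2).const_mul 2)).congr_deriv ?_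
    simp
    ring
  unfold secondDeriv
  have e1 := fun w => aux_fderiv (df w) (hf w)
  simp only [e1]
  have q0 : ∀ w : Euc N × Euc k, 0 < Real.sqrt (A + (‖w.1‖ ^ 2) ^ 2 + ‖w.2‖ ^ 2) :=
    fun w => Real.sqrt_pos.2 (pos w)
  have hz := q0 z
  refine aux_fderiv ?_ ?_
  · exact (df z).mul (((dD z).mul ((dq.const_mul 2 z).inv
      (mul_pos two_pos (q0 z)).ne')).const_mul (-ε))
  · refine ((hf z).mul ((hD.div ((hq z).const_mul 2) ?_).const_mul (-ε))).congr_deriv ?_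
    · simpa using hz.ne'
    · simp only [Pi.div_apply, zero_smul, add_zero]
      generalize Real.sqrt (A + (‖z.1‖ ^ 2) ^ 2 + ‖z.2‖ ^ 2) = q at *
      generalize Real.exp (-ε * q) = E at *
      field_simp
      ring

lemma aux_ge {N k : ℕ} (ε A c : ℝ) (hε : 0 < ε) (hA : 0 < A) (hc : 0 < c)
    (z v : Euc N × Euc k) :
    (c * Real.exp (-ε * Real.sqrt (A + ‖z.1‖ ^ 4 + ‖z.2‖ ^ 2))) *
     (- (ε * (8 * (inner ℝ z.1 v.1) ^ 2 + 4 * ‖z.1‖ ^ 2 * ‖v.1‖ ^ 2 + 2 * ‖v.2‖ ^ 2) /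
        (2 * Real.sqrt (A + ‖z.1‖ ^ 4 + ‖z.2‖ ^ 2)))) ≤
    secondDeriv (fun w : Euc N × Euc k =>
      c * Real.exp (-ε * Real.sqrt (A + ‖w.1‖ ^ 4 + ‖w.2‖ ^ 2))) z v := by
  rw [aux_second ε A c hA hc z v]
  apply mul_le_mul_of_nonneg_left _ (by positivity)
  rw [sub_eq_add_neg]
  exact le_add_of_nonneg_left (by positivity)

/-- **Lemma (lower bound for the Grushin operator applied to `Θ`).**
For `ε, A, c > 0` and `Θ(z) = c·exp(−ε√(A + |x|⁴ + |y|²))` one has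
`Δ_G Θ(z) ≥ −ε(2(N+2)+k) Θ(z)` for all `z ∈ ℝ^{N+k}`. -/
theorem grushin_exp_lower_bound (N k : ℕ) (hN : 1 ≤ N) (hk : 1 ≤ k)
    (ε A c : ℝ) (hε : 0 < ε) (hA : 0 < A) (hc : 0 < c) :
    ∀ z : Euc N × Euc k,
      grushin (fun w : Euc N × Euc k =>
          c * Real.exp (-ε * Real.sqrt (A + ‖w.1‖ ^ 4 + ‖w.2‖ ^ 2))) z ≥
        -(ε * (2 * ((N : ℝ) + 2) + k)) *
          (c * Real.exp (-ε * Real.sqrt (A + ‖z.1‖ ^ 4 + ‖z.2‖ ^ 2))) := by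
  intro z
  have hq : ‖z.1‖ ^ 2 ≤ Real.sqrt (A + ‖z.1‖ ^ 4 + ‖z.2‖ ^ 2) := by
    apply Real.le_sqrt_of_sq_le
    nlinarith [sq_nonneg ‖z.2‖]
  have hq0 : 0 < Real.sqrt (A + ‖z.1‖ ^ 4 + ‖z.2‖ ^ 2) := Real.sqrt_pos.2 (by positivity)
  have hX := Finset.sum_le_sum (s := Finset.univ) fun (i : Fin N) _ =>
    aux_ge ε A c hε hA hc z (EuclideanSpace.single i 1, 0)
  have hY := Finset.sum_le_sum (s := Finset.univ) fun (i : Fin k) _ =>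
    aux_ge ε A c hε hA hc z (0, EuclideanSpace.single i 1)
  have hs : ∑ i : Fin N, (z.1 i) ^ 2 = ‖z.1‖ ^ 2 := by
    rw [EuclideanSpace.norm_sq_eq]; simp
  have hY' := mul_le_mul_of_nonneg_left hY (sq_nonneg ‖z.1‖)
  unfold grushin laplacianX laplacianY
  refine le_trans ?_ (add_le_add hX hY')
  have hT : 0 < c * Real.exp (-ε * Real.sqrt (A + ‖z.1‖ ^ 4 + ‖z.2‖ ^ 2)) := by positivity
  generalize c * Real.exp (-ε * Real.sqrt (A + ‖z.1‖ ^ 4 + ‖z.2‖ ^ 2)) = T at *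
  generalize Real.sqrt (A + ‖z.1‖ ^ 4 + ‖z.2‖ ^ 2) = q at *
  clear hX hY hY'
  rw [← Finset.mul_sum, ← Finset.mul_sum]
  simp only [Finset.sum_neg_distrib, ← Finset.sum_div, ← Finset.mul_sum, Finset.sum_add_distrib,
    EuclideanSpace.inner_single_right, EuclideanSpace.norm_single, inner_zero_right]
  simp [hs]
  have key : ε * (2 * ((N : ℝ) + 2) + k) * T * (‖z.1‖ ^ 2 / q) ≤
      ε * (2 * ((N : ℝ) + 2) + k) * T * 1 :=
    mul_le_mul_of_nonneg_left ((div_le_one hq0).2 hq) (by positivity)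
  refine le_trans (le_of_eq ?_) (le_trans key (le_of_eq ?_))
  · field_simp
    ring
  · ring
end
end

section
/- Let T > 0, 0 < γ < 1, p > 1, a > 0, b > 0. There exists a constant K = K(a,b,p) such that: if w ∈ C¹([0,T]) satisfies w > 0 on [0,T] and w'(t) + a·w(t) ≥ b·∫_0^t (t−s)^{−γ} w(s)^p ds for all t ∈ [0,T], and if T ≥ 1, then w(0) < K. Moreover, K does not depend on T or γ. -/
open MeasureTheory Real Filter
open scoped ENNReal NNReal

noncomputable section

theorem core_bound (c p : ℝ) (hc : 0 < c) (hp : 1 < p) :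
    ∃ K : ℝ, ∀ (v v' : ℝ → ℝ), Continuous v → (∀ t, 0 < v t) →
      (∀ t ∈ Set.Ioo (0 : ℝ) 1, HasDerivAt v (v' t) t) →
      (∀ t ∈ Set.Ioo (0 : ℝ) 1, c * ∫ s in (0 : ℝ)..t, v s ^ p ≤ v' t) → v 0 < K := by
  set r : ℝ := p / (p + 1) with hr
  set q : ℝ := 2 * r with hq
  have hp1 : 0 < p + 1 := by linarith
  have hr0 : 0 < r := by positivity
  have hq1 : 1 < q := by
    rw [hq, hr, ← mul_div_assoc, lt_div_iff₀ hp1]; linarith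
  set d : ℝ := (q - 1) * c ^ r / 2 with hd
  have hcr : 0 < c ^ r := rpow_pos_of_pos hc r
  have hd0 : 0 < d := by
    have : 0 < q - 1 := by linarith
    positivity
  refine ⟨max 1 (2 * d ^ (1 / (1 - q))) + 1, ?_⟩
  intro v v' hv hpos hder hineq
  set F : ℝ → ℝ := fun t => ∫ s in (0 : ℝ)..t, v s ^ p with hF
  have hvp : Continuous (fun s => v s ^ p) := hv.rpow_const (fun s => Or.inl (hpos s).ne')
  have hFd : ∀ t, HasDerivAt F (v t ^ p) t := fun t =>
    intervalIntegral.integral_hasDerivAt_right (hvp.intervalIntegrable _ _)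
      (hvp.stronglyMeasurableAtFilter _ _) hvp.continuousAt
  have hFc : Continuous F := continuous_iff_continuousAt.2 fun t => (hFd t).continuousAt
  have hF0 : F 0 = 0 := by simp [hF]
  have hFpos : ∀ t, 0 < t → 0 < F t := fun t ht =>
    intervalIntegral.intervalIntegral_pos_of_pos (hvp.intervalIntegrable _ _)
      (fun s => rpow_pos_of_pos (hpos s) p) ht
  have hint : interior (Set.Icc (0 : ℝ) 1) = Set.Ioo 0 1 := interior_Icc
  have hvmono : MonotoneOn v (Set.Icc 0 1) := by
    apply monotoneOn_of_deriv_nonneg (convex_Icc 0 1) hv.continuousOn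
    · rw [hint]; intro t ht; exact (hder t ht).differentiableAt.differentiableWithinAt
    · rw [hint]; intro t ht; rw [(hder t ht).deriv]
      exact le_trans (mul_nonneg hc.le (hFpos t ht.1).le) (hineq t ht)
  -- energy
  have hgd : ∀ t ∈ Set.Ioo (0 : ℝ) 1, HasDerivAt (fun t => 2 / (p + 1) * v t ^ (p + 1) - c * F t ^ 2)
      (2 * v t ^ p * (v' t - c * F t)) t := by
    intro t ht
    have h1 := (((hder t ht).rpow_const (p := p + 1) (Or.inl (hpos t).ne')).const_mul (2 / (p + 1))).sub
      (((hFd t).pow 2).const_mul c)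
    refine HasDerivAt.congr_deriv h1 ?_
    have : p + 1 - 1 = p := by ring
    rw [this]
    field_simp
    simp
    ring
  have hg : MonotoneOn (fun t => 2 / (p + 1) * v t ^ (p + 1) - c * F t ^ 2) (Set.Icc 0 1) := by
    apply monotoneOn_of_deriv_nonneg (convex_Icc 0 1)
    · exact ((continuous_const.mul (hv.rpow_const (fun s => Or.inl (hpos s).ne'))).sub
        (continuous_const.mul (hFc.pow 2))).continuousOn
    · rw [hint]; intro t ht; exact (hgd t ht).differentiableAt.differentiableWithinAt
    · rw [hint]; intro t ht; rw [(hgd t ht).deriv]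
      have h1 := rpow_pos_of_pos (hpos t) p
      have h2 : 0 ≤ v' t - c * F t := sub_nonneg.2 (hineq t ht)
      positivity
  have hen : ∀ t ∈ Set.Icc (0 : ℝ) 1, c * F t ^ 2 ≤ v t ^ (p + 1) := by
    intro t ht
    have h1 := hg (Set.left_mem_Icc.2 zero_le_one) ht ht.1
    simp only [hF0] at h1
    have h2 := rpow_pos_of_pos (hpos 0) (p + 1)
    have h3 := rpow_pos_of_pos (hpos t) (p + 1)
    have h4 : 2 / (p + 1) ≤ 1 := by rw [div_le_one hp1]; linarith
    have h5 : 0 < 2 / (p + 1) := by positivity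
    nlinarith [mul_pos h5 h2]
  have hpow : ∀ t ∈ Set.Ioo (0 : ℝ) 1, c ^ r * F t ^ q ≤ v t ^ p := by
    intro t ht
    have hFt := hFpos t ht.1
    have h1 := rpow_le_rpow (by positivity) (hen t ⟨ht.1.le, ht.2.le⟩) hr0.le
    rw [mul_rpow hc.le (by positivity), ← rpow_natCast, ← rpow_mul hFt.le,
      ← rpow_mul (hpos t).le] at h1
    have e : (p + 1) * r = p := by rw [hr]; field_simp
    rw [e] at h1
    simpa [hq] using h1
  have hint2 : interior (Set.Icc (1 / 2 : ℝ) 1) = Set.Ioo (1 / 2) 1 := interior_Icc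
  have hhd : ∀ t ∈ Set.Ioo (1 / 2 : ℝ) 1, HasDerivAt (fun t => F t ^ (1 - q) + (q - 1) * c ^ r * t)
      ((q - 1) * (c ^ r - v t ^ p * F t ^ (-q))) t := by
    intro t ht
    have hFt := hFpos t (by linarith [ht.1])
    have h1 := ((hFd t).rpow_const (p := 1 - q) (Or.inl hFt.ne')).add
      ((hasDerivAt_id t).const_mul ((q - 1) * c ^ r))
    refine HasDerivAt.congr_deriv h1 ?_
    have : 1 - q - 1 = -q := by ring
    rw [this]
    ring
  have hh : AntitoneOn (fun t => F t ^ (1 - q) + (q - 1) * c ^ r * t) (Set.Icc (1 / 2) 1) := by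
    apply antitoneOn_of_deriv_nonpos (convex_Icc _ _)
    · apply ContinuousOn.add
      · exact hFc.continuousOn.rpow_const
          (fun t ht => Or.inl (hFpos t (by linarith [ht.1])).ne')
      · fun_prop
    · rw [hint2]; intro t ht; exact (hhd t ht).differentiableAt.differentiableWithinAt
    · rw [hint2]; intro t ht; rw [(hhd t ht).deriv]
      have ht0 : 0 < t := by linarith [ht.1]
      have hFt := hFpos t ht0
      have h1 := hpow t ⟨ht0, ht.2⟩
      have h2 : c ^ r ≤ v t ^ p * F t ^ (-q) := by
        rw [rpow_neg hFt.le, ← div_eq_mul_inv, le_div_iff₀ (rpow_pos_of_pos hFt q)]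
        exact h1
      exact mul_nonpos_of_nonneg_of_nonpos (by linarith) (by linarith)
  have hd1 : d ≤ F (1 / 2) ^ (1 - q) := by
    have h1 := hh (Set.left_mem_Icc.2 (by norm_num)) (Set.right_mem_Icc.2 (by norm_num))
      (by norm_num : (1 / 2 : ℝ) ≤ 1)
    simp only at h1
    have h2 := rpow_pos_of_pos (hFpos 1 one_pos) (1 - q)
    rw [hd]; linarith
  have hFh := hFpos (1 / 2) (by norm_num)
  have hM : F (1 / 2) ≤ d ^ (1 / (1 - q)) := by
    have h1 := rpow_le_rpow_of_nonpos hd0 hd1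
      (z := 1 / (1 - q)) (by apply div_nonpos_of_nonneg_of_nonpos <;> linarith)
    rwa [← rpow_mul hFh.le, mul_one_div_cancel (by linarith), rpow_one] at h1
  have hlow : v 0 ^ p * (1 / 2) ≤ F (1 / 2) := by
    have h1 : ∫ s in (0 : ℝ)..(1 / 2), v 0 ^ p ≤ ∫ s in (0 : ℝ)..(1 / 2), v s ^ p := by
      apply intervalIntegral.integral_mono_on (by norm_num) (by simp) (hvp.intervalIntegrable _ _)
      intro s hs
      apply rpow_le_rpow (hpos 0).le _ (by linarith)
      exact hvmono (Set.left_mem_Icc.2 zero_le_one) ⟨hs.1, by linarith [hs.2]⟩ hs.1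
    rw [intervalIntegral.integral_const, smul_eq_mul] at h1
    simp only [hF]
    linarith
  rcases le_total (v 0) 1 with h | h
  · linarith [le_max_left 1 (2 * d ^ (1 / (1 - q)))]
  · have h1 : v 0 ≤ v 0 ^ p := by
      simpa using rpow_le_rpow_of_exponent_le h hp.le
    linarith [le_max_right 1 (2 * d ^ (1 / (1 - q)))]

/-- **Lemma (Cazenave–Dickstein–Weissler, part (i)).**
For `a, b > 0` and `p > 1` there is a constant `K = K(a,b,p)` (independent of `T` and `γ`)
such that: whenever `0 < γ < 1`, `T ≥ 1`, and `w ∈ C¹([0,T])` is positive and satisfies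
`w'(t) + a w(t) ≥ b ∫_0^t (t−s)^{−γ} w(s)^p ds` on `[0,T]`, then `w(0) < K`. -/
theorem integro_differential_bound (a b p : ℝ) (ha : 0 < a) (hb : 0 < b) (hp : 1 < p) :
    ∃ K : ℝ, ∀ (T γ : ℝ) (w w' : ℝ → ℝ),
      0 < T → 0 < γ → γ < 1 →
      (∀ t ∈ Set.Icc (0 : ℝ) T, HasDerivWithinAt w (w' t) (Set.Icc 0 T) t) →
      ContinuousOn w' (Set.Icc 0 T) →
      (∀ t ∈ Set.Icc (0 : ℝ) T, 0 < w t) →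
      (∀ t ∈ Set.Icc (0 : ℝ) T,
        b * ∫ s in Set.Ioc (0 : ℝ) t, (t - s) ^ (-γ) * w s ^ p ≤ w' t + a * w t) →
      1 ≤ T → w 0 < K := by
  obtain ⟨K, hK⟩ := core_bound (b * exp (-(a * p))) p (by positivity) hp
  refine ⟨K, ?_⟩
  intro T γ w w' hT hγ0 hγ1 hder _ hpos hineq hT1
  set P : ℝ → ℝ := fun t => max 0 (min t 1) with hP
  have hPc : Continuous P := by fun_prop
  have hPm : ∀ t, P t ∈ Set.Icc (0 : ℝ) T := fun t =>
    ⟨le_max_left _ _, max_le hT.le ((min_le_right _ _).trans hT1)⟩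
  have hPe : ∀ t ∈ Set.Icc (0 : ℝ) 1, P t = t := fun t ht => by
    simp [hP, ht.1, ht.2]
  have hwc : ContinuousOn w (Set.Icc 0 T) := fun t ht => (hder t ht).continuousWithinAt
  set W : ℝ → ℝ := fun t => w (P t) with hW
  have hWc : Continuous W := hwc.comp_continuous hPc hPm
  have hWpos : ∀ t, 0 < W t := fun t => hpos _ (hPm t)
  have hWp : Continuous (fun s => W s ^ p) := hWc.rpow_const (fun s => Or.inl (hWpos s).ne')
  have hWe : ∀ t ∈ Set.Icc (0 : ℝ) 1, W t = w t := fun t ht => by simp only [hW, hPe t ht]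
  have key := hK (fun t => exp (a * t) * W t) (fun t => exp (a * t) * (w' t + a * w t))
    (by fun_prop) (fun t => mul_pos (exp_pos _) (hWpos t)) ?_ ?_
  · simpa [hWe 0 (by simp)] using key
  · intro t ht
    have h1 : HasDerivAt w (w' t) t :=
      (hder t ⟨ht.1.le, by linarith [ht.2]⟩).hasDerivAt
        (Icc_mem_nhds ht.1 (by linarith [ht.2]))
    have h2 : HasDerivAt W (w' t) t := by
      apply h1.congr_of_eventuallyEq
      filter_upwards [Ioo_mem_nhds ht.1 ht.2] with s hs
      exact hWe s ⟨hs.1.le, hs.2.le⟩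
    have h3 : HasDerivAt (fun t => exp (a * t)) (exp (a * t) * a) t := by
      simpa using ((hasDerivAt_id t).const_mul a).exp
    refine HasDerivAt.congr_deriv (h3.mul h2) ?_
    rw [hWe t ⟨ht.1.le, ht.2.le⟩]; ring
  · intro t ht
    have h1 := hineq t ⟨ht.1.le, by linarith [ht.2]⟩
    have e1 : ∫ s in Set.Ioc (0 : ℝ) t, (t - s) ^ (-γ) * w s ^ p
        = ∫ s in (0 : ℝ)..t, (t - s) ^ (-γ) * W s ^ p := by
      rw [intervalIntegral.integral_of_le ht.1.le]
      apply setIntegral_congr_fun measurableSet_Ioc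
      intro s hs
      simp only
      rw [hWe s ⟨hs.1.le, by linarith [hs.2, ht.2]⟩]
    have hi0 : IntervalIntegrable (fun s : ℝ => (t - s) ^ (-γ)) volume 0 t := by
      have := (intervalIntegral.intervalIntegrable_rpow' (a := 0) (b := t) (r := -γ)
        (by linarith)).comp_sub_left t
      simpa using this.symm
    have hi : IntervalIntegrable (fun s : ℝ => (t - s) ^ (-γ) * W s ^ p) volume 0 t :=
      hi0.mul_continuousOn hWp.continuousOn
    have hvc : Continuous (fun s => (exp (a * s) * W s) ^ p) :=
      Continuous.rpow_const (by fun_prop)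
        (fun s => Or.inl (mul_pos (exp_pos _) (hWpos s)).ne')
    have h2 : ∫ s in (0 : ℝ)..t, exp (-(a * p)) * (exp (a * s) * W s) ^ p
        ≤ ∫ s in (0 : ℝ)..t, (t - s) ^ (-γ) * W s ^ p := by
      apply intervalIntegral.integral_mono_on_of_le_Ioo ht.1.le
        ((continuous_const.mul hvc).intervalIntegrable _ _) hi
      intro s hs
      have hw := rpow_pos_of_pos (hWpos s) p
      change exp (-(a * p)) * (exp (a * s) * W s) ^ p ≤ (t - s) ^ (-γ) * W s ^ p
      rw [mul_rpow (exp_pos _).le (hWpos s).le, ← exp_mul, ← mul_assoc, ← exp_add]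
      apply mul_le_mul_of_nonneg_right _ hw.le
      have h3 : exp (-(a * p) + a * s * p) ≤ 1 := by
        rw [exp_le_one_iff]
        have : 0 < a * p := by positivity
        nlinarith [hs.2, ht.2]
      exact h3.trans (one_le_rpow_of_pos_of_le_one_of_nonpos (by linarith [hs.2])
        (by linarith [hs.1, ht.2]) (by linarith))
    rw [intervalIntegral.integral_const_mul] at h2
    rw [e1] at h1
    have h4 : 0 ≤ ∫ s in (0 : ℝ)..t, (exp (a * s) * W s) ^ p :=
      intervalIntegral.integral_nonneg ht.1.le
        (fun s _ => (rpow_pos_of_pos (mul_pos (exp_pos _) (hWpos s)) p).le)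
    have h5 : b * exp (-(a * p)) * ∫ s in (0 : ℝ)..t, (exp (a * s) * W s) ^ p
        ≤ w' t + a * w t := by
      rw [mul_assoc]
      exact (mul_le_mul_of_nonneg_left h2 hb.le).trans h1
    have h6 : 0 ≤ w' t + a * w t := le_trans (by positivity) h5
    have h7 : 1 ≤ exp (a * t) := one_le_exp (by have := ht.1; positivity)
    exact h5.trans (le_mul_of_one_le_left h6 h7)
end
end

section
/- Let 0 ≤ γ < 1, p > 1 with pγ ≤ 1, a > 0, b > 0. Then there is no T = ∞ solution: that is, there exists no function w ∈ C¹([0,∞)) with w > 0 on [0,∞) satisfying w'(t) + a·w(t) ≥ b·∫_0^t (t−s)^{−γ} w(s)^p ds for all t ≥ 0. Equivalently, if w ∈ C¹([0,T]), w > 0, satisfies this integro-differential inequality on [0,T], and pγ ≤ 1, then necessarily T < ∞. -/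
open MeasureTheory Real Filter
open scoped ENNReal NNReal

noncomputable section

theorem pow_rpow_swap (x : ℝ) (hx : 0 ≤ x) (n : ℕ) (y : ℝ) : (x ^ n) ^ y = (x ^ y) ^ n := by
  rw [← Real.rpow_natCast, ← Real.rpow_natCast, ← Real.rpow_mul hx, ← Real.rpow_mul hx, mul_comm]

theorem blow_step2 (F : ℝ → ℝ) (c p : ℝ) (hc : 0 < c) (hp : 1 < p)
    (hmono : ∀ s t, 0 ≤ s → s ≤ t → F s ≤ F t)
    (hF : ∀ t h L, 1 ≤ t → 0 < h → h ≤ 1 → 0 ≤ L →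
      F t + L * (c * h ^ p * (t + h + L)⁻¹ * F t ^ p) ≤ F (t + h + L))
    (t₀ : ℝ) (ht₀ : 1 ≤ t₀) (hpos : 0 < F t₀)
    (hbig : (2:ℝ) ^ ((p + 1) / (p - 1)) * (t₀ + 4) ≤ c * F t₀ ^ (p - 1)) : False := by
  set R : ℝ := (2:ℝ) ^ ((p + 1) / (p - 1)) with hR
  have hq : 0 < p - 1 := by linarith
  have hR1 : 1 < R := Real.one_lt_rpow (by norm_num) (by positivity)
  have hRq : R ^ (p - 1) = 2 ^ (p + 1) := by
    rw [hR, ← Real.rpow_mul (by norm_num)]; congr 1; field_simp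
  have key : ∀ n : ℕ, F t₀ * R ^ n ≤ F (t₀ + 4 - 4 * (1 / 2) ^ n) := by
    intro n
    induction n with
    | zero => simp
    | succ n ih =>
      set h : ℝ := (1 / 2) ^ n with hh
      have hh0 : 0 < h := by positivity
      have hh1 : h ≤ 1 := pow_le_one₀ (by norm_num) (by norm_num)
      set t := t₀ + 4 - 4 * h with ht
      have e : t₀ + 4 - 4 * (1 / 2) ^ (n + 1) = t + h + h := by
        rw [pow_succ, ← hh, ht]; ring
      rw [e]
      have h1 := hF t h h (by linarith) hh0 hh1 hh0.le
      have hX : 0 < F t₀ * R ^ n := by positivity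
      have hFt : 0 < F t := lt_of_lt_of_le hX ih
      have hpp : ∀ x : ℝ, 0 < x → x ^ p = x ^ (p - 1) * x := by
        intro x hx
        rw [← Real.rpow_add_one hx.ne']; congr 1; ring
      have h2 : (F t₀ * R ^ n) ^ p ≤ F t ^ p := Real.rpow_le_rpow hX.le ih (by linarith)
      have h3 : (t₀ + 4)⁻¹ ≤ (t + h + h)⁻¹ := by
        apply inv_anti₀ <;> linarith
      have h4 : h * (c * h ^ p * (t₀ + 4)⁻¹ * (F t₀ * R ^ n) ^ p) ≤
          h * (c * h ^ p * (t + h + h)⁻¹ * F t ^ p) := by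
        have : 0 < t + h + h := by linarith
        gcongr
      have h5 : h * h ^ p * (R ^ n) ^ (p - 1) = 1 := by
        have a1 : (R ^ n) ^ (p - 1) = (2 ^ (p + 1)) ^ n := by
          rw [← hRq, pow_rpow_swap _ (by positivity)]
        have a2 : h * h ^ p = ((1 / 2) ^ (p + 1)) ^ n := by
          rw [mul_comm, ← Real.rpow_add_one hh0.ne', hh, ← Real.rpow_natCast, ← Real.rpow_natCast, ← Real.rpow_mul (by positivity), ← Real.rpow_mul (by positivity), mul_comm]
        rw [a1, a2, ← mul_pow, ← Real.mul_rpow (by norm_num) (by norm_num)]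
        norm_num
      have h6 : h * (c * h ^ p * (t₀ + 4)⁻¹ * (F t₀ * R ^ n) ^ p) =
          (c * F t₀ ^ (p - 1)) * (t₀ + 4)⁻¹ * (F t₀ * R ^ n) := by
        rw [hpp _ hX, Real.mul_rpow hpos.le (by positivity)]
        linear_combination (c * F t₀ ^ (p - 1) * (t₀ + 4)⁻¹ * (F t₀ * R ^ n)) * h5
      have h7 : R ≤ (c * F t₀ ^ (p - 1)) * (t₀ + 4)⁻¹ := by
        rw [← div_eq_mul_inv, le_div_iff₀ (by linarith)]; exact hbig
      have h8 := mul_le_mul_of_nonneg_right h7 hX.le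
      rw [pow_succ]
      nlinarith
  obtain ⟨n, hn⟩ := pow_unbounded_of_one_lt (F (t₀ + 4) / F t₀) hR1
  rw [div_lt_iff₀ hpos] at hn
  have h1 := key n
  have hh1 : (1 / 2 : ℝ) ^ n ≤ 1 := pow_le_one₀ (by norm_num) (by norm_num)
  have hh0 : 0 < (1 / 2 : ℝ) ^ n := by positivity
  have h2 := hmono (t₀ + 4 - 4 * (1 / 2) ^ n) (t₀ + 4) (by linarith) (by linarith)
  nlinarith

theorem blow (F : ℝ → ℝ) (c p : ℝ) (hc : 0 < c) (hp : 1 < p)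
    (hmono : ∀ s t, 0 ≤ s → s ≤ t → F s ≤ F t)
    (hF : ∀ t h L, 1 ≤ t → 0 < h → h ≤ 1 → 0 ≤ L →
      F t + L * (c * h ^ p * (t + h + L)⁻¹ * F t ^ p) ≤ F (t + h + L))
    (h1 : 0 < F 1) : False := by
  have hq : 0 < p - 1 := by linarith
  have hFpos : ∀ t, 1 ≤ t → 0 < F t := fun t ht => h1.trans_le (hmono 1 t (by norm_num) ht)
  have hpp : ∀ x : ℝ, 0 < x → x ^ p = x ^ (p - 1) * x := by
    intro x hx
    rw [← Real.rpow_add_one hx.ne']; congr 1; ring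
  have hT : ∀ n : ℕ, (2:ℝ) ≤ 2 ^ (n + 1) := by
    intro n
    have : (1:ℝ) ≤ 2 ^ n := one_le_pow₀ (by norm_num)
    rw [pow_succ]; linarith
  set G : ℕ → ℝ := fun n => F (2 ^ (n + 1)) with hG
  have hGpos : ∀ n, 0 < G n := fun n => hFpos _ (by linarith [hT n])
  have hGs : ∀ n, G n + c / 4 * G n ^ p ≤ G (n + 1) := by
    intro n
    have ht := hT n
    have := hF (2 ^ (n + 1)) 1 (2 ^ (n + 1) - 1) (by linarith) (by norm_num) le_rfl (by linarith)
    have e : (2:ℝ) ^ (n + 1) + 1 + (2 ^ (n + 1) - 1) = 2 ^ (n + 1 + 1) := by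
      rw [pow_succ _ (n + 1)]; ring
    rw [e, Real.one_rpow] at this
    refine le_trans ?_ this
    have hp0 : 0 < F (2 ^ (n + 1)) ^ p := Real.rpow_pos_of_pos (hGpos n) _
    have h3 : 1 / 4 ≤ ((2:ℝ) ^ (n + 1) - 1) * (2 ^ (n + 1 + 1))⁻¹ := by
      rw [← div_eq_mul_inv, le_div_iff₀ (by positivity), pow_succ _ (n + 1)]
      linarith
    have := mul_le_mul_of_nonneg_right h3 (mul_pos hc hp0).le
    simp only [hG]
    linarith
  have hGm : ∀ n, G 0 ≤ G n := by
    intro n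
    exact hmono _ _ (by positivity) (pow_le_pow_right₀ (by norm_num) (by omega))
  have hGlin : ∀ n : ℕ, (n : ℝ) * (c / 4 * G 0 ^ p) ≤ G n := by
    intro n
    induction n with
    | zero => simpa using (hGpos 0).le
    | succ n ih =>
      have : G 0 ^ p ≤ G n ^ p := Real.rpow_le_rpow (hGpos 0).le (hGm n) (by linarith)
      have := mul_le_mul_of_nonneg_left this (by positivity : 0 ≤ c / 4)
      have := hGs n
      push_cast
      linarith
  set M : ℝ := (4:ℝ) ^ (1 / (p - 1)) with hM
  have hMq : M ^ (p - 1) = 4 := by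
    rw [hM, ← Real.rpow_mul (by norm_num)]; field_simp; simp
  have hM0 : 0 < M := by positivity
  set B : ℝ := (4 * M / c) ^ (1 / (p - 1)) with hB
  have hB0 : 0 < B := by positivity
  have hBq : B ^ (p - 1) = 4 * M / c := by
    rw [hB, ← Real.rpow_mul (by positivity), one_div_mul_cancel hq.ne', Real.rpow_one]
  have hd : 0 < c / 4 * G 0 ^ p := mul_pos (by positivity) (Real.rpow_pos_of_pos (hGpos 0) _)
  obtain ⟨N, hN⟩ := exists_nat_ge (B / (c / 4 * G 0 ^ p))
  rw [div_le_iff₀ hd] at hN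
  have hbig : ∀ n, N ≤ n → M * G n ≤ G (n + 1) := by
    intro n hn
    have hBn : B ≤ G n := by
      have : (N:ℝ) ≤ n := by exact_mod_cast hn
      have := mul_le_mul_of_nonneg_right this hd.le
      linarith [hGlin n]
    have h2 : B ^ (p - 1) ≤ G n ^ (p - 1) := Real.rpow_le_rpow hB0.le hBn hq.le
    rw [hBq, div_le_iff₀ hc] at h2
    have h3 := hGs n
    rw [hpp _ (hGpos n)] at h3
    have h4 := mul_le_mul_of_nonneg_right h2 (hGpos n).le
    have := hGpos n
    linarith
  have hgeo : ∀ k : ℕ, M ^ k * G N ≤ G (N + k) := by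
    intro k
    induction k with
    | zero => simp
    | succ k ih =>
      have := hbig (N + k) (by omega)
      have := mul_le_mul_of_nonneg_left ih hM0.le
      rw [pow_succ, ← add_assoc]; linarith
  have hgeo2 : ∀ k : ℕ, 4 ^ k * G N ^ (p - 1) ≤ G (N + k) ^ (p - 1) := by
    intro k
    have := Real.rpow_le_rpow (mul_pos (pow_pos hM0 k) (hGpos N)).le (hgeo k) hq.le
    rw [Real.mul_rpow (by positivity) (hGpos N).le] at this
    have a1 : (M ^ k) ^ (p - 1) = 4 ^ k := by
      rw [pow_rpow_swap _ hM0.le, hMq]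
    rwa [a1] at this
  set R : ℝ := (2:ℝ) ^ ((p + 1) / (p - 1)) with hR
  have hR0 : 0 < R := by positivity
  have hA : 0 < c * G N ^ (p - 1) := mul_pos hc (Real.rpow_pos_of_pos (hGpos N) _)
  obtain ⟨k, hk⟩ := pow_unbounded_of_one_lt (R * (2 ^ (N + 1) + 4) / (c * G N ^ (p - 1))) (by norm_num : (1:ℝ) < 2)
  rw [div_lt_iff₀ hA] at hk
  refine blow_step2 F c p hc hp hmono hF (2 ^ (N + k + 1)) (by linarith [hT (N + k)]) (hGpos (N + k)) ?_
  have h2k : (1:ℝ) ≤ 2 ^ k := one_le_pow₀ (by norm_num)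
  calc R * (2 ^ (N + k + 1) + 4) ≤ 2 ^ k * (R * (2 ^ (N + 1) + 4)) := by
        have e : (2:ℝ) ^ (N + k + 1) = 2 ^ k * 2 ^ (N + 1) := by ring
        rw [e]; nlinarith
    _ ≤ 2 ^ k * (2 ^ k * (c * G N ^ (p - 1))) := by gcongr
    _ = c * (4 ^ k * G N ^ (p - 1)) := by
        rw [show (4:ℝ) = 2 * 2 by norm_num, mul_pow]; ring
    _ ≤ c * G (N + k) ^ (p - 1) := by
        exact mul_le_mul_of_nonneg_left (hgeo2 k) hc.le

/-- **Lemma (Cazenave–Dickstein–Weissler, part (ii)).**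
Let `0 ≤ γ < 1`, `p > 1` with `pγ ≤ 1`, and `a, b > 0`. Then there is no positive
`w ∈ C¹([0,∞))` satisfying `w'(t) + a w(t) ≥ b ∫_0^t (t−s)^{−γ} w(s)^p ds` for all
`t ≥ 0`. -/
theorem no_global_integro_differential_solution (γ p a b : ℝ)
    (hγ0 : 0 ≤ γ) (hγ1 : γ < 1) (hp : 1 < p) (hpγ : p * γ ≤ 1)
    (ha : 0 < a) (hb : 0 < b) :
    ¬ ∃ w w' : ℝ → ℝ,
        (∀ t ∈ Set.Ici (0 : ℝ), HasDerivWithinAt w (w' t) (Set.Ici 0) t) ∧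
        ContinuousOn w' (Set.Ici 0) ∧
        (∀ t ∈ Set.Ici (0 : ℝ), 0 < w t) ∧
        (∀ t ∈ Set.Ici (0 : ℝ),
          b * ∫ s in Set.Ioc (0 : ℝ) t, (t - s) ^ (-γ) * w s ^ p ≤ w' t + a * w t) := by
  rintro ⟨w, w', hw, -, hpos, hineq⟩
  have hwc : ContinuousOn w (Set.Ici 0) := fun t ht => (hw t ht).continuousWithinAt
  have hwp : ContinuousOn (fun s => w s ^ p) (Set.Ici 0) :=
    hwc.rpow_const (fun x hx => Or.inl (hpos x hx).ne')
  have hsub : ∀ s t : ℝ, 0 ≤ s → s ≤ t → Set.uIcc s t ⊆ Set.Ici 0 := by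
    intro s t hs hst x hx
    rw [Set.uIcc_of_le hst] at hx
    exact hs.trans hx.1
  have hint : ∀ s t : ℝ, 0 ≤ s → s ≤ t → IntervalIntegrable (fun s => w s ^ p) volume s t :=
    fun s t hs hst => (hwp.mono (hsub s t hs hst)).intervalIntegrable
  have hppos : ∀ s, 0 ≤ s → 0 < w s ^ p := fun s hs => Real.rpow_pos_of_pos (hpos s hs) _
  set F : ℝ → ℝ := fun t => ∫ s in (0:ℝ)..t, w s ^ p with hFdef
  have hadd : ∀ s t : ℝ, 0 ≤ s → s ≤ t → F t = F s + ∫ x in s..t, w x ^ p := by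
    intro s t hs hst
    exact (intervalIntegral.integral_add_adjacent_intervals (hint 0 s le_rfl hs)
      (hint s t hs hst)).symm
  have hmono : ∀ s t, 0 ≤ s → s ≤ t → F s ≤ F t := by
    intro s t hs hst
    rw [hadd s t hs hst]
    have : 0 ≤ ∫ x in s..t, w x ^ p :=
      intervalIntegral.integral_nonneg hst (fun x hx => (hppos x (hs.trans hx.1)).le)
    linarith
  have hF0 : F 0 = 0 := by simp [hFdef]
  have hFnn : ∀ t, 0 ≤ t → 0 ≤ F t := fun t ht => hF0 ▸ hmono 0 t le_rfl ht
  have hF1 : 0 < F 1 := by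
    apply intervalIntegral.intervalIntegral_pos_of_pos_on (hint 0 1 le_rfl zero_le_one)
    · intro x hx; exact hppos x hx.1.le
    · norm_num
  -- convolution bound
  have hconv : ∀ t, 0 < t → t ^ (-γ) * F t ≤
      ∫ s in Set.Ioc (0 : ℝ) t, (t - s) ^ (-γ) * w s ^ p := by
    intro t ht
    rw [← intervalIntegral.integral_of_le ht.le, hFdef, ← intervalIntegral.integral_const_mul]
    have hk : IntervalIntegrable (fun s => (t - s) ^ (-γ)) volume 0 t := by
      have := (intervalIntegral.intervalIntegrable_rpow' (a := 0) (b := t)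
        (by linarith : -1 < -γ)).comp_sub_left t
      simpa using this.symm
    apply intervalIntegral.integral_mono_on_of_le_Ioo ht.le
    · exact (hint 0 t le_rfl ht.le).const_mul _
    · exact hk.mul_continuousOn (hwp.mono (hsub 0 t le_rfl ht.le))
    · intro x hx
      apply mul_le_mul_of_nonneg_right _ (hppos x hx.1.le).le
      exact Real.rpow_le_rpow_of_nonpos (by linarith [hx.2]) (by linarith [hx.1]) (by linarith)
  -- lower bound for w
  have hlow : ∀ s h, 0 < h → h ≤ 1 → h ≤ s →
      b * Real.exp (-a) * h * s ^ (-γ) * F (s - h) ≤ w s := by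
    intro s h hh hh1 hhs
    have hder : ∀ x ∈ Set.Ioo (s - h) s,
        HasDerivAt (fun x => Real.exp (a * x) * w x)
          (Real.exp (a * x) * (w' x + a * w x)) x := by
      intro x hx
      have hx0 : 0 < x := by linarith [hx.1]
      have h1 := (hw x hx0.le).hasDerivAt (Ici_mem_nhds hx0)
      have h2 : HasDerivAt (fun x => Real.exp (a * x)) (Real.exp (a * x) * a) x := by
        simpa using ((hasDerivAt_id x).const_mul a).exp
      have h3 := h2.mul h1
      have e : Real.exp (a * x) * (w' x + a * w x) =
          Real.exp (a * x) * a * w x + Real.exp (a * x) * w' x := by ring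
      rw [e]
      exact h3
    have hcont : ContinuousOn (fun x => Real.exp (a * x) * w x) (Set.Icc (s - h) s) := by
      apply ContinuousOn.mul (by fun_prop)
      exact hwc.mono (fun x hx => by have := hx.1; simp only [Set.mem_Ici]; linarith)
    obtain ⟨x, hx, hxe⟩ := exists_hasDerivAt_eq_slope _ _ (by linarith : s - h < s) hcont hder
    have hx0 : 0 < x := by linarith [hx.1]
    have hs0 : 0 < s := by linarith
    rw [show s - (s - h) = h by ring, eq_div_iff hh.ne'] at hxe
    have h1 := hineq x hx0.le
    have h2 := mul_le_mul_of_nonneg_left (hconv x hx0) hb.le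
    have h3 : s ^ (-γ) * F (s - h) ≤ x ^ (-γ) * F x := by
      apply mul_le_mul
      · exact Real.rpow_le_rpow_of_nonpos hx0 hx.2.le (by linarith)
      · exact hmono _ _ (by linarith) hx.1.le
      · exact hFnn _ (by linarith)
      · positivity
    have h4 := mul_le_mul_of_nonneg_left h3 hb.le
    have hZ : 0 ≤ b * (s ^ (-γ) * F (s - h)) :=
      mul_nonneg hb.le (mul_nonneg (by positivity) (hFnn _ (by linarith)))
    have h5 : b * (s ^ (-γ) * F (s - h)) ≤ w' x + a * w x := by linarith
    have h6 : Real.exp (a * s) * Real.exp (-a) ≤ Real.exp (a * x) := by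
      rw [← Real.exp_add]
      apply Real.exp_le_exp.mpr
      nlinarith [hx.1]
    have h7 := mul_le_mul h6 h5 hZ (Real.exp_pos _).le
    have h8 := mul_le_mul_of_nonneg_right h7 hh.le
    have h9 : 0 < Real.exp (a * (s - h)) * w (s - h) :=
      mul_pos (Real.exp_pos _) (hpos _ (by simp only [Set.mem_Ici]; linarith))
    apply le_of_mul_le_mul_left _ (Real.exp_pos (a * s))
    linarith
  have hc : 0 < b * Real.exp (-a) := by positivity
  refine blow F ((b * Real.exp (-a)) ^ p) p (by positivity) hp hmono ?_ hF1
  intro t h L ht hh hh1 hL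
  have hT1 : 1 ≤ t + h + L := by linarith
  have hFt := hFnn t (by linarith)
  rw [hadd t (t + h + L) (by linarith) (by linarith)]
  have e1 := intervalIntegral.integral_add_adjacent_intervals
    (hint t (t + h) (by linarith) (by linarith))
    (hint (t + h) (t + h + L) (by linarith) (by linarith))
  have e2 : 0 ≤ ∫ x in t..(t + h), w x ^ p :=
    intervalIntegral.integral_nonneg (by linarith) (fun x hx => (hppos x (by linarith [hx.1])).le)
  have e3 : L * ((b * Real.exp (-a)) ^ p * h ^ p * (t + h + L)⁻¹ * F t ^ p) ≤
      ∫ x in (t + h)..(t + h + L), w x ^ p := by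
    have : ∫ x in (t + h)..(t + h + L), ((b * Real.exp (-a)) ^ p * h ^ p * (t + h + L)⁻¹ * F t ^ p)
        = L * ((b * Real.exp (-a)) ^ p * h ^ p * (t + h + L)⁻¹ * F t ^ p) := by
      rw [intervalIntegral.integral_const]; simp
    rw [← this]
    apply intervalIntegral.integral_mono_on (by linarith) (by simp)
      (hint (t + h) (t + h + L) (by linarith) (by linarith))
    intro x hx
    have hx1 := hx.1
    have hx2 := hx.2
    have l1 : b * Real.exp (-a) * h * (t + h + L) ^ (-γ) * F t ≤ w x := by
      refine le_trans ?_ (hlow x h hh hh1 (by linarith))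
      apply mul_le_mul
      · apply mul_le_mul_of_nonneg_left _ (by positivity)
        exact Real.rpow_le_rpow_of_nonpos (by linarith) hx2 (by linarith)
      · exact hmono _ _ (by linarith) (by linarith)
      · exact hFt
      · have : 0 < x := by linarith
        positivity
    have l2 : (t + h + L)⁻¹ ≤ ((t + h + L) ^ (-γ)) ^ p := by
      rw [← Real.rpow_mul (by linarith), ← Real.rpow_neg_one]
      apply Real.rpow_le_rpow_of_exponent_le hT1
      linarith
    have hTp : 0 < t + h + L := by linarith
    calc (b * Real.exp (-a)) ^ p * h ^ p * (t + h + L)⁻¹ * F t ^ p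
        ≤ (b * Real.exp (-a)) ^ p * h ^ p * ((t + h + L) ^ (-γ)) ^ p * F t ^ p := by gcongr
      _ = (b * Real.exp (-a) * h * (t + h + L) ^ (-γ) * F t) ^ p := by
        rw [Real.mul_rpow (x := b * Real.exp (-a) * h * (t + h + L) ^ (-γ)) (by positivity) hFt,
          Real.mul_rpow (x := b * Real.exp (-a) * h) (by positivity) (by positivity),
          Real.mul_rpow hc.le hh.le]
      _ ≤ w x ^ p := Real.rpow_le_rpow (by positivity) l1 (by linarith)
  linarith
end
end
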